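/- (i) The centraliser of Ỹ in 𝔄 equals ℍ^{gl_n}: {f ∈ 𝔄 : f·Ỹ = Ỹ·f} = ℍ^{gl_n}. (ii) The centraliser of ℍ^{gl_n} in 𝔄 equals the F-linear span of the powers of Ỹ: {f ∈ 𝔄 : f·g = g·f for all g ∈ ℍ^{gl_n}} = span_F{Ỹ^m : m ∈ ℤ}. -/

import Mathlib

set_option maxHeartbeats 1000000
set_option synthInstance.maxHeartbeats 1000000

noncomputable section

/-- The Laurent polynomial ring `R[X₁^{±1}, …, Xₙ^{±1}]` in `n` variables over `R`,
realised as the monoid algebra of the additive monoid `Fin n →₀ ℤ` of exponent vectors. -/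
abbrev Laur (R : Type*) [CommRing R] (n : ℕ) : Type _ :=
  AddMonoidAlgebra R (Fin n →₀ ℤ)

variable {R : Type*} [CommRing R] {n : ℕ}

/-- The monomial `c · X^a`. -/
def mono (a : Fin n →₀ ℤ) (c : R) : Laur R n := AddMonoidAlgebra.single a c

/-- The generator `X_i`. -/
def Xel (i : Fin n) : Laur R n := mono (Finsupp.single i 1) 1

/-- The element `X_i⁻¹`. -/
def XinvEl (i : Fin n) : Laur R n := mono (Finsupp.single i (-1)) 1

/-- Multiplication by a Laurent polynomial, as a linear endomorphism. -/
def mulOp (x : Laur R n) : Module.End R (Laur R n) := LinearMap.mulLeft R x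

/-- The operator of multiplication by `X_i`, with `ℕ`-indexing (`0`-based; junk value `1`
out of range). -/
def XOp (i : ℕ) : Module.End R (Laur R n) :=
  if h : i < n then mulOp (Xel ⟨i, h⟩) else 1

/-- The operator of multiplication by `X_i⁻¹`, with `ℕ`-indexing. -/
def XinvOp (i : ℕ) : Module.End R (Laur R n) :=
  if h : i < n then mulOp (XinvEl ⟨i, h⟩) else 1

/-- Ascending product `f s * f (s+1) * ⋯ * f (s+len-1)` (equal to `1` when `len = 0`). -/
def aF {M : Type*} [Monoid M] (f : ℕ → M) (s len : ℕ) : M :=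
  ((List.range' s len).map f).prod

/-- Descending product `f (s+len-1) * ⋯ * f (s+1) * f s` (equal to `1` when `len = 0`). -/
def dF {M : Type*} [Monoid M] (f : ℕ → M) (s len : ℕ) : M :=
  (((List.range' s len).map f).reverse).prod

/-- Integer power `u^z`, where `v` is a designated (two-sided) inverse of `u`. -/
def zpowOp {M : Type*} [Monoid M] (u v : M) (z : ℤ) : M :=
  if 0 ≤ z then u ^ z.toNat else v ^ (-z).toNat

/-- The generating set of the algebra `ℍ^{gl_n}`: the operators `T_k`, `Y_i^{±1}`, and
`e_{ij}` for `i ≠ j` (all `0`-based). -/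
def HglSet {R : Type*} [CommRing R] {n : ℕ} (T Y Yi : ℕ → Module.End R (Laur R n))
    (e : ℕ → ℕ → Module.End R (Laur R n)) : Set (Module.End R (Laur R n)) :=
  {f | (∃ k, k + 1 < n ∧ f = T k) ∨ (∃ i, i < n ∧ f = Y i) ∨ (∃ i, i < n ∧ f = Yi i)
      ∨ (∃ i j, i < n ∧ j < n ∧ i ≠ j ∧ f = e i j)}

/-- The generating set of the algebra `𝔄`: the operators `T_k`, `X_i`, `D_i`, `Y_i^{±1}`. -/
def AfrSet {R : Type*} [CommRing R] {n : ℕ} (T XO D Y Yi : ℕ → Module.End R (Laur R n)) :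
    Set (Module.End R (Laur R n)) :=
  {f | (∃ k, k + 1 < n ∧ f = T k) ∨
       (∃ i, i < n ∧ (f = XO i ∨ f = D i ∨ f = Y i ∨ f = Yi i))}

/-!
Write `H` for the affine Hecke algebra, generated by the `T_k` and `π^{±1}`, and `V`, `V'` for the
spans of the `X_i` and of the `D_i`. The product `Ỹ` equals `(π⁻¹)^n`; it commutes with `H`, and
conjugation by it multiplies the `X_i` by `q` and the `D_i` by `q⁻¹`.

(i) One has `H V ⊆ V H` and `H V' ⊆ V' H`, and `V V'` and `V' V` are contained in `ℍ^{gl_n}`: up to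
units of `H` on both sides every `X_i D_j` and `D_j X_i` reduces modulo `H` to `0` or to
`X_{n-1} D_n`. Hence `𝔄` is the sum over `m` of `V^m ℍ^{gl_n}` (`m ≥ 0`) and `V'^{-m} ℍ^{gl_n}`
(`m < 0`), on which conjugation by `Ỹ` acts by `q^m`. These eigenvalues are distinct, so the
centraliser of `Ỹ` is the piece of degree `0`.

(ii) If `f` commutes with all `X_i D_n`, then the commutator of `f` with `X_i X_k⁻¹` is killed by
right multiplication by `Y_n - Y_n⁻¹`, hence is `0`: conjugation by `X_1 ⋯ X_n` grades the
double affine Hecke algebra, and `Y_n` has nonzero degree. As an operator into `F(X_1, …, X_n)`, `f`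
is a combination, with rational functions as coefficients, of the twists `X_i ↦ q^{l_i} X_{w(i)}`.
By Dedekind's independence of characters only the twists fixing every `X_i X_k⁻¹` occur, and these
are the powers of `Ỹ`. Commuting with `X_{k+1} X_k⁻¹` and `T_k`, `f` commutes with `s_k`; as it
commutes with `π⁻¹` too, it commutes with every `X_i ↦ q X_i`, so it is diagonal on monomials and an
`F`-linear retraction `F(X_1, …, X_n) → F` moves the coefficients into `F`.
-/

section Words

variable {M : Type*} [Monoid M]

lemma aF_zero (f : ℕ → M) (s : ℕ) : aF f s 0 = 1 := by simp [aF]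

lemma dF_zero (f : ℕ → M) (s : ℕ) : dF f s 0 = 1 := by simp [dF]

lemma aF_succ_left (f : ℕ → M) (s l : ℕ) : aF f s (l + 1) = f s * aF f (s + 1) l := by
  simp [aF, List.range'_succ]

lemma aF_succ_right (f : ℕ → M) (s l : ℕ) : aF f s (l + 1) = aF f s l * f (s + l) := by
  simp [aF, List.range'_concat]

lemma dF_succ_left (f : ℕ → M) (s l : ℕ) : dF f s (l + 1) = f (s + l) * dF f s l := by
  simp [dF, List.range'_concat]

lemma dF_succ_right (f : ℕ → M) (s l : ℕ) : dF f s (l + 1) = dF f (s + 1) l * f s := by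
  simp [dF, List.range'_succ]

lemma aF_add (f : ℕ → M) (s k l : ℕ) : aF f s (k + l) = aF f s k * aF f (s + k) l := by
  simp [aF, ← List.range'_append_1]

lemma dF_add (f : ℕ → M) (s k l : ℕ) : dF f s (k + l) = dF f (s + k) l * dF f s k := by
  simp [dF, ← List.range'_append_1]

lemma inv_aF {G : Type*} [Group G] (f : ℕ → G) (s l : ℕ) : (aF f s l)⁻¹ = dF f⁻¹ s l := by
  rw [aF, dF, List.prod_inv_reverse, List.map_map]; rfl

lemma map_aF {N : Type*} [Monoid N] (φ : M →* N) (f : ℕ → M) (s l : ℕ) :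
    φ (aF f s l) = aF (φ ∘ f) s l := by
  simp [aF, map_list_prod]

lemma map_dF {N : Type*} [Monoid N] (φ : M →* N) (f : ℕ → M) (s l : ℕ) :
    φ (dF f s l) = dF (φ ∘ f) s l := by
  simp [dF, map_list_prod]

lemma aF_congr {f g : ℕ → M} {s l : ℕ} (h : ∀ k, k < s + l → f k = g k) :
    aF f s l = aF g s l := by
  rw [aF, aF, List.map_congr_left fun k hk => h k (List.mem_range'_1.1 hk).2]

lemma dF_congr {f g : ℕ → M} {s l : ℕ} (h : ∀ k, k < s + l → f k = g k) :
    dF f s l = dF g s l := by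
  rw [dF, dF, List.map_congr_left fun k hk => h k (List.mem_range'_1.1 hk).2]

lemma aF_mem {σ : Type*} [SetLike σ M] [SubmonoidClass σ M] {S : σ} {f : ℕ → M} {s l : ℕ}
    (h : ∀ k, k < s + l → f k ∈ S) : aF f s l ∈ S := by
  refine list_prod_mem fun x hx => ?_
  obtain ⟨k, hk, rfl⟩ := List.mem_map.1 hx
  exact h k (List.mem_range'_1.1 hk).2

lemma dF_mem {σ : Type*} [SetLike σ M] [SubmonoidClass σ M] {S : σ} {f : ℕ → M} {s l : ℕ}
    (h : ∀ k, k < s + l → f k ∈ S) : dF f s l ∈ S := by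
  refine list_prod_mem fun x hx => ?_
  obtain ⟨k, hk, rfl⟩ := List.mem_map.1 (List.mem_reverse.1 hx)
  exact h k (List.mem_range'_1.1 hk).2

lemma semiconjBy_aF {a : M} {f g : ℕ → M} {s t l : ℕ}
    (h : ∀ k < l, SemiconjBy a (f (s + k)) (g (t + k))) :
    SemiconjBy a (aF f s l) (aF g t l) := by
  induction l with
  | zero => simp [aF_zero]
  | succ l ih =>
    rw [aF_succ_right, aF_succ_right]
    exact (ih fun k hk => h k (by omega)).mul_right (h l (by omega))

lemma semiconjBy_dF {a : M} {f g : ℕ → M} {s t l : ℕ}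
    (h : ∀ k < l, SemiconjBy a (f (s + k)) (g (t + k))) :
    SemiconjBy a (dF f s l) (dF g t l) := by
  induction l with
  | zero => simp [dF_zero]
  | succ l ih =>
    rw [dF_succ_left, dF_succ_left]
    exact (h l (by omega)).mul_right (ih fun k hk => h k (by omega))

lemma commute_aF {a : M} {f : ℕ → M} {s l : ℕ} (h : ∀ k, s ≤ k → k < s + l → Commute a (f k)) :
    Commute a (aF f s l) :=
  semiconjBy_aF fun k _ => h (s + k) (by omega) (by omega)

lemma commute_dF {a : M} {f : ℕ → M} {s l : ℕ} (h : ∀ k, s ≤ k → k < s + l → Commute a (f k)) :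
    Commute a (dF f s l) :=
  semiconjBy_dF fun k _ => h (s + k) (by omega) (by omega)

lemma semiconjBy_pow_of_shift {a : M} {f : ℕ → M} {m : ℕ}
    (h : ∀ k < m, SemiconjBy a (f (k + 1)) (f k)) {i k : ℕ} (hik : k + i ≤ m) :
    SemiconjBy (a ^ i) (f (k + i)) (f k) := by
  induction i with
  | zero => exact (pow_zero a).symm ▸ SemiconjBy.one_left (f k)
  | succ i ih => exact pow_succ a i ▸ (ih (by omega)).mul_left (h (k + i) (by omega))

/-- `T 0, …, T (N - 1)` satisfy the braid relations of type `A_N`. -/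
structure BraidRelations (T : ℕ → M) (N : ℕ) : Prop where
  commute : ∀ {i j}, i + 1 < j → j < N → Commute (T i) (T j)
  braid : ∀ {i}, i + 1 < N → T i * T (i + 1) * T i = T (i + 1) * T i * T (i + 1)

/-- The positive lift of the longest permutation of `s, …, s + m - 1` to the braid monoid. -/
def longestWord (T : ℕ → M) : ℕ → ℕ → M
  | _, 0 => 1
  | s, m + 1 => dF T s m * longestWord T (s + 1) m

lemma commute_longestWord {a : M} {T : ℕ → M} {s m : ℕ}
    (h : ∀ k, s ≤ k → k + 1 < s + m → Commute a (T k)) : Commute a (longestWord T s m) := by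
  induction m generalizing s with
  | zero => exact Commute.one_right a
  | succ m ih =>
    exact (commute_dF fun k h₁ h₂ => h k h₁ (by omega)).mul_right
      (ih fun k h₁ h₂ => h k (by omega) (by omega))

lemma semiconjBy_longestWord {a : M} {T : ℕ → M} {s m : ℕ}
    (h : ∀ k, s ≤ k → k + 1 < s + m → SemiconjBy a (T (k + 1)) (T k)) :
    SemiconjBy a (longestWord T (s + 1) m) (longestWord T s m) := by
  induction m generalizing s with
  | zero => exact SemiconjBy.one_right a
  | succ m ih =>
    refine SemiconjBy.mul_right (semiconjBy_dF fun k hk => ?_)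
      (ih fun k h₁ h₂ => h k (by omega) (by omega))
    rw [add_right_comm]
    exact h (s + k) (by omega) (by omega)

namespace BraidRelations

variable {T : ℕ → M} {N : ℕ}

lemma semiconjBy_dF_succ (hT : BraidRelations T N) {s l k : ℕ} (hsk : s ≤ k) (hkl : k + 1 < s + l)
    (hl : s + l ≤ N) :
    SemiconjBy (dF T s l) (T (k + 1)) (T k) := by
  obtain ⟨a, rfl⟩ := Nat.exists_eq_add_of_le hsk
  obtain ⟨b, rfl⟩ := Nat.exists_eq_add_of_lt (show a + 1 < l by omega)
  have hsplit : dF T s (a + 1 + b + 1)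
      = dF T (s + a + 2) b * (T (s + a + 1) * T (s + a)) * dF T s a := by
    rw [show a + 1 + b + 1 = a + (2 + b) by ring, dF_add, dF_add]
    simp [dF_succ_left, dF_zero, mul_assoc]
  have hlow : Commute (dF T s a) (T (s + a + 1)) :=
    (commute_dF fun k _ hk => (hT.commute (by omega) (by omega)).symm).symm
  have hmid : SemiconjBy (T (s + a + 1) * T (s + a)) (T (s + a + 1)) (T (s + a)) := by
    rw [SemiconjBy, ← hT.braid (by omega), mul_assoc]
  have hhigh : Commute (dF T (s + a + 2) b) (T (s + a)) :=
    (commute_dF fun k _ hk => hT.commute (by omega) (by omega)).symm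
  rw [hsplit]
  exact SemiconjBy.mul_left (SemiconjBy.mul_left hhigh hmid) hlow

lemma aF_mul_dF (hT : BraidRelations T N) {s m : ℕ} (h : s + m < N) :
    aF T s (m + 1) * dF T s m = dF T s (m + 1) * aF T (s + 1) m := by
  have hshift : SemiconjBy (dF T s (m + 1)) (aF T (s + 1) m) (aF T s m) :=
    semiconjBy_aF fun k hk => by
      rw [add_right_comm]; exact hT.semiconjBy_dF_succ (by omega) (by omega) (by omega)
  rw [hshift.eq, aF_succ_right, dF_succ_left, mul_assoc]

lemma longestWord_succ (hT : BraidRelations T N) {s m : ℕ} (h : s + m ≤ N) :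
    longestWord T s (m + 1) = aF T s m * longestWord T s m := by
  induction m generalizing s with
  | zero => simp [longestWord, aF_zero, dF_zero]
  | succ m ih =>
    rw [longestWord, ih (by omega), ← mul_assoc, ← hT.aF_mul_dF (by omega), mul_assoc,
      longestWord]

lemma prod_aF_mul_longestWord (hT : BraidRelations T N) {i : ℕ} (hi : i ≤ N + 1) :
    ((List.range i).map fun j => aF T 0 (N - j)).prod * longestWord T 0 (N + 1 - i)
      = longestWord T 0 (N + 1) := by
  induction i with
  | zero => simp
  | succ i ih =>
    rw [← ih (by omega), List.prod_range_succ, mul_assoc, show N + 1 - i = N - i + 1 by omega,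
      hT.longestWord_succ (by omega), show N + 1 - (i + 1) = N - i by omega]

end BraidRelations

end Words

section AffineBraid

variable {G : Type*} [Group G]

/-- The affine braid word `T_i ⋯ T_{N-1} π⁻¹ T_0⁻¹ ⋯ T_{i-1}⁻¹`, with `P` standing for `π⁻¹`. -/
def affineY (T : ℕ → G) (P : G) (N i : ℕ) : G := aF T i (N - i) * P * aF T⁻¹ 0 i

variable {T : ℕ → G} {P : G} {N : ℕ}

lemma BraidRelations.prod_affineY_mul_longestWord (hT : BraidRelations T N)
    (hP : ∀ {k}, k + 1 < N → SemiconjBy P (T (k + 1)) (T k)) {i : ℕ} (hi : i ≤ N + 1) :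
    ((List.range i).map (affineY T P N)).prod * longestWord T 0 i
      = ((List.range i).map fun j => aF T 0 (N - j)).prod * P ^ i := by
  induction i with
  | zero => simp [longestWord]
  | succ i ih =>
    have hY : affineY T P N i * longestWord T 0 (i + 1)
        = aF T i (N - i) * P * longestWord T 1 i := by
      rw [longestWord, affineY, ← mul_assoc, zero_add, mul_assoc (aF T i (N - i) * P),
        ← inv_inv (dF T 0 i), ← inv_inv T, ← inv_aF, inv_inv, inv_inv]
      simp
    have hP' : SemiconjBy P (longestWord T 1 i) (longestWord T 0 i) :=
      semiconjBy_longestWord fun k _ hk => hP (by omega)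
    have hfar : Commute (longestWord T 0 i) (aF T i (N - i)) :=
      commute_aF fun k _ _ =>
        (commute_longestWord fun j _ _ => (hT.commute (by omega) (by omega)).symm).symm
    have hpow : SemiconjBy (P ^ i) (aF T i (N - i)) (aF T 0 (N - i)) :=
      semiconjBy_aF fun k hk => by
        simpa [add_comm] using semiconjBy_pow_of_shift (f := T) (m := N - 1) (k := k) (i := i)
          (fun j hj => hP (by omega)) (by omega)
    rw [List.prod_range_succ, List.prod_range_succ, mul_assoc, hY, mul_assoc (aF T i _), hP'.eq,
      ← mul_assoc (aF T i _), ← hfar.eq, ← mul_assoc, ← mul_assoc, ih (by omega),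
      mul_assoc _ (P ^ i), hpow.eq]
    simp only [pow_succ, mul_assoc]

theorem BraidRelations.prod_affineY (hT : BraidRelations T N)
    (hP : ∀ {k}, k + 1 < N → SemiconjBy P (T (k + 1)) (T k))
    (hPpow : ∀ {k}, k < N → Commute (P ^ (N + 1)) (T k)) :
    ((List.range (N + 1)).map (affineY T P N)).prod = P ^ (N + 1) := by
  have hword : ((List.range (N + 1)).map fun j => aF T 0 (N - j)).prod
      = longestWord T 0 (N + 1) := by
    simpa [longestWord] using hT.prod_aF_mul_longestWord le_rfl
  have hcomm : Commute (P ^ (N + 1)) (longestWord T 0 (N + 1)) :=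
    commute_longestWord fun k _ hk => hPpow (by omega)
  rw [← mul_left_inj (longestWord T 0 (N + 1)), hT.prod_affineY_mul_longestWord hP le_rfl, hword,
    hcomm.eq]

end AffineBraid

/-- A representation in `A` of the double affine Hecke algebra of type `GL_{N+1}`, with
`κ = τ⁻¹ - τ` and with `P` standing for `π⁻¹`. Indices are `0`-based: `T k` matters for `k < N`
and `X i` for `i ≤ N`. -/
structure DAHARep (F A : Type*) [Field F] [Ring A] [Algebra F A] (N : ℕ) (q κ : F) where
  T : ℕ → Aˣ
  X : ℕ → Aˣ
  P : Aˣ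
  q_ne_zero : q ≠ 0
  inv_T : ∀ {k}, k < N → (↑(T k)⁻¹ : A) = T k + κ • (1 : A)
  braid : BraidRelations T N
  T_mul_X_mul_T : ∀ {k}, k < N → T k * X k * T k = X (k + 1)
  commute_T_X : ∀ {k j}, k < N → j ≤ N → j ≠ k → j ≠ k + 1 → Commute (T k) (X j)
  commute_X : ∀ {i j}, i ≤ N → j ≤ N → Commute (X i) (X j)
  P_X_succ : ∀ {j}, j < N → SemiconjBy P (X (j + 1)) (X j)
  P_mul_X_zero : (P * X 0 : A) = q • (X N * P : A)
  P_T_succ : ∀ {k}, k + 1 < N → SemiconjBy P (T (k + 1)) (T k)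
  P_sq_T_zero : 0 < N → SemiconjBy (P ^ 2) (T 0) (T (N - 1))

namespace DAHARep

variable {F A : Type*} [Field F] [Ring A] [Algebra F A] {N : ℕ} {q κ : F}
  (ρ : DAHARep F A N q κ)

/-- The Cherednik operator `Y_i`. -/
def Y (i : ℕ) : Aˣ := affineY ρ.T ρ.P N i

/-- The `q`-Dunkl operator `D_i`. -/
def D (i : ℕ) : A :=
  ↑(aF ρ.T i (N - i)) * ((q - q⁻¹)⁻¹ • (↑(ρ.X N)⁻¹ * (↑(ρ.Y N) - ↑(ρ.Y N)⁻¹)))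
    * ↑(dF ρ.T i (N - i))

lemma Y_last : ρ.Y N = ρ.P * (dF ρ.T 0 N)⁻¹ := by
  rw [Y, affineY, Nat.sub_self, aF_zero, one_mul, ← inv_inj, mul_inv_rev, mul_inv_rev, inv_aF]
  simp

lemma D_last : ρ.D N = (q - q⁻¹)⁻¹ • (↑(ρ.X N)⁻¹ * (↑(ρ.Y N) - ↑(ρ.Y N)⁻¹)) := by
  simp [D, aF_zero, dF_zero]

lemma D_eq_T_mul_D_mul_T {i : ℕ} (hi : i < N) : ρ.D i = ρ.T i * ρ.D (i + 1) * ρ.T i := by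
  rw [D, D, show N - i = N - (i + 1) + 1 by omega, aF_succ_left, dF_succ_right]
  simp only [Units.val_mul, mul_assoc]

lemma inv_X_eq_T_mul_inv_X_mul_T {i : ℕ} (hi : i < N) :
    (ρ.X i)⁻¹ = ρ.T i * (ρ.X (i + 1))⁻¹ * ρ.T i := by
  rw [← ρ.T_mul_X_mul_T hi]
  group

lemma X_eq {i : ℕ} (hi : i ≤ N) : ρ.X i = dF ρ.T 0 i * ρ.X 0 * aF ρ.T 0 i := by
  induction i with
  | zero => simp [aF_zero, dF_zero]
  | succ i ih =>
    rw [← ρ.T_mul_X_mul_T hi, ih (by omega), dF_succ_left, aF_succ_right, zero_add]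
    simp only [mul_assoc]

lemma commute_T_Y_last {k : ℕ} (hk : k + 1 < N) : Commute (ρ.T k) (ρ.Y N) := by
  rw [Y_last]
  exact (SemiconjBy.mul_left (ρ.P_T_succ hk) (SemiconjBy.inv_symm_left
    (ρ.braid.semiconjBy_dF_succ k.zero_le (by omega) (by omega)))).symm

lemma commute_D_last {u : Aˣ} (hX : Commute u (ρ.X N)) (hY : Commute u (ρ.Y N)) :
    Commute (u : A) (ρ.D N) := by
  rw [D_last]
  exact ((hX.inv_right.units_val).mul_right
    (hY.units_val.sub_right hY.inv_right.units_val)).smul_right _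

lemma commute_T_D_last {k : ℕ} (hk : k + 1 < N) : Commute (ρ.T k : A) (ρ.D N) :=
  ρ.commute_D_last (ρ.commute_T_X (by omega) le_rfl (by omega) (by omega))
    (ρ.commute_T_Y_last hk)

lemma commute_T_mul_P_Y_last (ρ : DAHARep F A (N + 1) q κ) :
    Commute (ρ.T N * ρ.P) (ρ.Y (N + 1)) := by
  have hsq : SemiconjBy (ρ.P ^ 2) (ρ.T 0) (ρ.T N) := ρ.P_sq_T_zero N.succ_pos
  have hdF : SemiconjBy ρ.P (dF ρ.T 1 N) (dF ρ.T 0 N) :=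
    semiconjBy_dF fun k hk => by
      rw [add_comm 1 k, zero_add]; exact ρ.P_T_succ (by omega)
  rw [Commute, SemiconjBy, Y_last]
  calc ρ.T N * ρ.P * (ρ.P * (dF ρ.T 0 (N + 1))⁻¹)
      = (ρ.T N * ρ.P ^ 2) * (dF ρ.T 0 (N + 1))⁻¹ := by simp only [pow_two, mul_assoc]
    _ = ρ.P * (ρ.P * (dF ρ.T 1 N)⁻¹) := by
      rw [← hsq.eq, dF_succ_right, pow_two]; group
    _ = ρ.P * ((dF ρ.T 0 N)⁻¹ * ρ.P) := by rw [hdF.inv_right.eq]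
    _ = ρ.P * (dF ρ.T 0 (N + 1))⁻¹ * (ρ.T N * ρ.P) := by
      rw [dF_succ_left, zero_add]; group

lemma P_D_last (ρ : DAHARep F A (N + 1) q κ) :
    SemiconjBy (ρ.P : A) (ρ.D (N + 1)) (ρ.D N) := by
  have hX : ρ.P * (ρ.X (N + 1))⁻¹ = ρ.T N * (ρ.X (N + 1))⁻¹ * (ρ.T N * ρ.P) := by
    rw [(ρ.P_X_succ N.lt_succ_self).inv_right.eq,
      ρ.inv_X_eq_T_mul_inv_X_mul_T N.lt_succ_self, mul_assoc]
  have hXA : (ρ.P : A) * ↑(ρ.X (N + 1))⁻¹ = ρ.T N * ↑(ρ.X (N + 1))⁻¹ * (ρ.T N * ρ.P) := by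
    exact_mod_cast congrArg Units.val hX
  have hY : Commute (ρ.T N * ρ.P : A) (↑(ρ.Y (N + 1)) - ↑(ρ.Y (N + 1))⁻¹) := by
    have h := ρ.commute_T_mul_P_Y_last
    rw [← Units.val_mul]
    exact h.units_val.sub_right h.inv_right.units_val
  rw [SemiconjBy, ρ.D_eq_T_mul_D_mul_T N.lt_succ_self, D_last]
  simp only [mul_smul_comm, smul_mul_assoc]
  rw [← mul_assoc, hXA, mul_assoc _ _ (_ - _), hY.eq]
  simp only [mul_assoc]

lemma P_D_succ {j : ℕ} (hj : j < N) : SemiconjBy (ρ.P : A) (ρ.D (j + 1)) (ρ.D j) := by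
  obtain ⟨M, rfl⟩ : ∃ M, N = M + 1 := Nat.exists_eq_succ_of_ne_zero (by omega)
  induction Nat.le_of_lt_succ hj using Nat.decreasingInduction with
  | self => exact ρ.P_D_last
  | of_succ j hjM ih =>
    have hT : SemiconjBy (ρ.P : A) (ρ.T (j + 1)) (ρ.T j) := (ρ.P_T_succ (by omega)).units_val
    rw [ρ.D_eq_T_mul_D_mul_T (by omega : j + 1 < M + 1), ρ.D_eq_T_mul_D_mul_T hj]
    exact (hT.mul_right (ih (by omega))).mul_right hT

lemma P_mul_inv_X_zero : (ρ.P * ↑(ρ.X 0)⁻¹ : A) = q⁻¹ • (↑(ρ.X N)⁻¹ * ρ.P : A) := by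
  rw [Units.mul_inv_eq_iff_eq_mul, smul_mul_assoc, mul_assoc, ρ.P_mul_X_zero, mul_smul_comm,
    smul_smul, inv_mul_cancel₀ ρ.q_ne_zero, one_smul, Units.inv_mul_cancel_left]

lemma P_mul_D_zero : ρ.P * ρ.D 0 = q⁻¹ • (ρ.D N * ρ.P) := by
  set A₀ : Aˣ := aF ρ.T 0 N
  set Δ : Aˣ := dF ρ.T 0 N
  have hX : (A₀ * ↑(ρ.X N)⁻¹ : A) = ↑(ρ.X 0)⁻¹ * ↑Δ⁻¹ := by
    rw [ρ.X_eq le_rfl]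
    simp [A₀, Δ]
  have hP : (ρ.P : A) = ρ.Y N * Δ := by rw [Y_last]; simp [Δ]
  have hYY : Commute (ρ.Y N : A) (↑(ρ.Y N) - ↑(ρ.Y N)⁻¹) :=
    (Commute.refl _).sub_right (Commute.refl (ρ.Y N)).inv_right.units_val
  rw [D_last, D, Nat.sub_zero]
  simp only [mul_smul_comm, smul_mul_assoc]
  rw [smul_comm]
  congr 1
  calc (ρ.P : A) * (A₀ * (↑(ρ.X N)⁻¹ * (↑(ρ.Y N) - ↑(ρ.Y N)⁻¹)) * Δ)
      = (ρ.P * ↑(ρ.X 0)⁻¹) * ↑Δ⁻¹ * (↑(ρ.Y N) - ↑(ρ.Y N)⁻¹) * Δ := by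
        rw [← mul_assoc (A₀ : A), hX]; simp only [mul_assoc]
    _ = q⁻¹ • (↑(ρ.X N)⁻¹ * (ρ.Y N * (↑(ρ.Y N) - ↑(ρ.Y N)⁻¹)) * Δ) := by
        rw [ρ.P_mul_inv_X_zero, hP]
        simp only [smul_mul_assoc, mul_assoc, Units.mul_inv_cancel_left]
    _ = q⁻¹ • (↑(ρ.X N)⁻¹ * (↑(ρ.Y N) - ↑(ρ.Y N)⁻¹) * ρ.P) := by
        rw [hYY.eq, hP]; simp only [mul_assoc]

lemma commute_T_D_of_lt {k j : ℕ} (hkj : k + 1 < j) (hj : j ≤ N) :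
    Commute (ρ.T k : A) (ρ.D j) := by
  induction hj using Nat.decreasingInduction with
  | self => exact ρ.commute_T_D_last hkj
  | of_succ j hj ih =>
    have hT : Commute (ρ.T k : A) (ρ.T j) := (ρ.braid.commute hkj hj).units_val
    rw [ρ.D_eq_T_mul_D_mul_T hj]
    exact (hT.mul_right (ih (by omega))).mul_right hT

lemma commute_T_D_of_gt {k j : ℕ} (hjk : j < k) (hk : k < N) :
    Commute (ρ.T k : A) (ρ.D j) := by
  induction j generalizing k with
  | zero =>
    obtain ⟨k, rfl⟩ : ∃ m, k = m + 1 := ⟨k - 1, by omega⟩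
    have hT : SemiconjBy (ρ.P : A) (ρ.T (k + 1)) (ρ.T k) := (ρ.P_T_succ hk).units_val
    refine ρ.P.isUnit.mul_left_cancel ?_
    calc (ρ.P * (ρ.T (k + 1) * ρ.D 0) : A) = ρ.T k * (ρ.P * ρ.D 0) := by
          rw [← mul_assoc, hT.eq, mul_assoc]
      _ = q⁻¹ • (ρ.D N * (ρ.T k * ρ.P)) := by
          rw [ρ.P_mul_D_zero, mul_smul_comm, ← mul_assoc, (ρ.commute_T_D_last hk).eq, mul_assoc]
      _ = ρ.P * (ρ.D 0 * ρ.T (k + 1)) := by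
          rw [← hT.eq, ← mul_assoc, ← smul_mul_assoc, ← ρ.P_mul_D_zero, mul_assoc]
  | succ j ih =>
    obtain ⟨k, rfl⟩ : ∃ m, k = m + 1 := ⟨k - 1, by omega⟩
    have hT : SemiconjBy (ρ.P : A) (ρ.T (k + 1)) (ρ.T k) := (ρ.P_T_succ hk).units_val
    have hD := ρ.P_D_succ (show j < N by omega)
    have hcomm : Commute (ρ.T k : A) (ρ.D j) := ih (by omega) (by omega)
    refine ρ.P.isUnit.mul_left_cancel ?_
    rw [(hT.mul_right hD).eq, (hD.mul_right hT).eq, hcomm.eq]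

lemma commute_T_D {k j : ℕ} (hk : k < N) (hj : j ≤ N) (hjk : j ≠ k) (hjk' : j ≠ k + 1) :
    Commute (ρ.T k : A) (ρ.D j) := by
  rcases lt_or_gt_of_ne hjk with h | h
  · exact ρ.commute_T_D_of_gt h hk
  · exact ρ.commute_T_D_of_lt (by omega) hj

end DAHARep

section Algebra

variable {F A : Type*} [CommRing F] [Ring A] [Algebra F A]

/-- The subalgebra of all `x` with `x W ⊆ W`. -/
def leftStabilizer (W : Submodule F A) : Subalgebra F A where
  carrier := {x | ∀ w ∈ W, x * w ∈ W}
  mul_mem' hx hy w hw := by rw [mul_assoc]; exact hx _ (hy w hw)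
  add_mem' hx hy w hw := by rw [add_mul]; exact W.add_mem (hx w hw) (hy w hw)
  algebraMap_mem' r w hw := by rw [← Algebra.smul_def]; exact W.smul_mem r hw

lemma adjoin_le_of_mul_mem {S : Set A} {W : Submodule F A} (h₁ : 1 ∈ W)
    (hS : ∀ s ∈ S, ∀ w ∈ W, s * w ∈ W) : Subalgebra.toSubmodule (Algebra.adjoin F S) ≤ W :=
  fun x hx => by
    have hx' : x ∈ leftStabilizer W := Algebra.adjoin_le (S := leftStabilizer W) hS hx
    simpa using hx' 1 h₁

lemma adjoin_mul_span_le {S V : Set A} {B : Subalgebra F A}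
    (h : ∀ s ∈ S, ∀ v ∈ V, s * v ∈ Submodule.span F V * Subalgebra.toSubmodule B) :
    Subalgebra.toSubmodule (Algebra.adjoin F S) * Submodule.span F V
      ≤ Submodule.span F V * Subalgebra.toSubmodule B := by
  set W := Submodule.span F V * Subalgebra.toSubmodule B
  have hWB : W * Subalgebra.toSubmodule B ≤ W := by
    rw [mul_assoc, B.isIdempotentElem_toSubmodule.eq]
  have hstab : Algebra.adjoin F S ≤ leftStabilizer W := by
    refine Algebra.adjoin_le fun s hs w hw => ?_
    have hsV : Submodule.span F V ≤ W.comap (LinearMap.mulLeft F s) :=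
      Submodule.span_le.2 (h s hs)
    refine Submodule.mul_induction_on hw (fun v hv b hb => ?_) fun w w' hw hw' => ?_
    · rw [← mul_assoc]
      exact hWB (Submodule.mul_mem_mul (hsV hv) hb)
    · rw [mul_add]
      exact W.add_mem hw hw'
  refine Submodule.mul_le.2 fun x hx v hv => hstab hx v ?_
  simpa using Submodule.mul_mem_mul hv ((Subalgebra.mem_toSubmodule B).2 B.one_mem)

/-- The elements which are multiplied by `μ` under conjugation by `u`. -/
def conjEigenspace (u : Aˣ) (μ : F) : Submodule F A :=
  Module.End.eigenspace (LinearMap.mulLeft F (u : A) ∘ₗ LinearMap.mulRight F (↑u⁻¹ : A)) μ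

variable {u : Aˣ} {μ ν : F} {x y : A}

lemma mem_conjEigenspace : x ∈ conjEigenspace u μ ↔ u * x = μ • (x * u) := by
  rw [conjEigenspace, Module.End.mem_eigenspace_iff, LinearMap.comp_apply,
    LinearMap.mulRight_apply, LinearMap.mulLeft_apply, ← mul_assoc, Units.mul_inv_eq_iff_eq_mul,
    smul_mul_assoc]

lemma mem_conjEigenspace_one : x ∈ conjEigenspace u (1 : F) ↔ Commute (u : A) x := by
  rw [mem_conjEigenspace, one_smul, Commute, SemiconjBy]

lemma mul_mem_conjEigenspace (hx : x ∈ conjEigenspace u μ) (hy : y ∈ conjEigenspace u ν) :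
    x * y ∈ conjEigenspace u (μ * ν) := by
  rw [mem_conjEigenspace] at *
  rw [← mul_assoc, hx, smul_mul_assoc, mul_assoc, hy, mul_smul_comm, smul_smul, mul_assoc]

lemma pow_le_conjEigenspace {V : Submodule F A} (hV : V ≤ conjEigenspace u μ) (k : ℕ) :
    V ^ k ≤ conjEigenspace u (μ ^ k) := by
  induction k with
  | zero =>
    rw [pow_zero, pow_zero, Submodule.one_le, mem_conjEigenspace_one]
    exact Commute.one_right _
  | succ k ih =>
    rw [pow_succ, pow_succ]
    exact Submodule.mul_le.2 fun x hx y hy => mul_mem_conjEigenspace (ih hx) (hV hy)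

end Algebra

section Grading

lemma iSup_inf_eq_of_iSupIndep {α ι : Type*} [CompleteLattice α] [IsModularLattice α]
    {R G : ι → α} (hG : iSupIndep G) (hR : R ≤ G) (i : ι) : (⨆ j, R j) ⊓ G i = R i := by
  have hsplit : ⨆ j, R j = R i ⊔ ⨆ (j) (_ : j ≠ i), R j := by
    rw [← iSup_split_single]
  have hdisj : (⨆ (j) (_ : j ≠ i), R j) ⊓ G i = ⊥ :=
    ((hG i).mono_right (iSup₂_mono fun j _ => hR j)).symm.eq_bot
  rw [hsplit, sup_inf_assoc_of_le _ (hR i), hdisj, sup_bot_eq]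

variable {F A : Type*} [Field F] [Ring A] [Algebra F A] {q : F} {u v : Aˣ} {g : A}

lemma inv_mem_conjEigenspace {μ : F} (hμ : μ ≠ 0) (hv : (v : A) ∈ conjEigenspace u μ) :
    (↑v⁻¹ : A) ∈ conjEigenspace u μ⁻¹ := by
  rw [mem_conjEigenspace, ← inv_smul_eq_iff₀ hμ] at hv
  rw [mem_conjEigenspace, Units.mul_inv_eq_iff_eq_mul, smul_mul_assoc, mul_assoc, ← mul_smul_comm,
    hv, Units.inv_mul_cancel_left]

lemma zpow_injective_of_pow_ne_one (hq₀ : q ≠ 0) (hq : ∀ m : ℕ, m ≠ 0 → q ^ m ≠ 1) :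
    Function.Injective fun m : ℤ => q ^ m := by
  have hfin : ¬ IsOfFinOrder (Units.mk0 q hq₀) := by
    rw [isOfFinOrder_iff_pow_eq_one]
    rintro ⟨m, hm, h⟩
    exact hq m hm.ne' (by simpa using congrArg Units.val h)
  intro m m' h
  exact injective_zpow_iff_not_isOfFinOrder.2 hfin (Units.ext (by simpa using h))

lemma iSupIndep_conjEigenspace_zpow (hq₀ : q ≠ 0) (hq : ∀ m : ℕ, m ≠ 0 → q ^ m ≠ 1) (u : Aˣ) :
    iSupIndep fun m : ℤ => conjEigenspace u (q ^ m) :=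
  (Module.End.eigenspaces_iSupIndep _).comp (zpow_injective_of_pow_ne_one hq₀ hq)

lemma adjoin_le_iSup_conjEigenspace (hq₀ : q ≠ 0) {S : Set A}
    (hS : ∀ s ∈ S, ∃ d : ℤ, s ∈ conjEigenspace u (q ^ d)) :
    Subalgebra.toSubmodule (Algebra.adjoin F S) ≤ ⨆ m : ℤ, conjEigenspace u (q ^ m) := by
  refine adjoin_le_of_mul_mem (Submodule.mem_iSup_of_mem 0 ?_) fun s hs w hw => ?_
  · rw [zpow_zero, mem_conjEigenspace_one]
    exact Commute.one_right _
  · obtain ⟨d, hd⟩ := hS s hs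
    have hle : ⨆ m : ℤ, conjEigenspace u (q ^ m)
        ≤ (⨆ m : ℤ, conjEigenspace u (q ^ m)).comap (LinearMap.mulLeft F s) :=
      iSup_le fun m x hx => Submodule.mem_iSup_of_mem (d + m) (by
        rw [zpow_add₀ hq₀]; exact mul_mem_conjEigenspace hd hx)
    exact hle hw

lemma eq_zero_of_mul_unit_eq_self (hq₀ : q ≠ 0) (hq : ∀ m : ℕ, m ≠ 0 → q ^ m ≠ 1) {d : ℤ}
    (hd : d ≠ 0) (hv : (v : A) ∈ conjEigenspace u (q ^ d))
    (hg : g ∈ ⨆ m : ℤ, conjEigenspace u (q ^ m)) (hgv : g * v = g) : g = 0 := by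
  obtain ⟨s, hs⟩ := Submodule.mem_iSup_iff_exists_finset.1 hg
  have hinj : Function.Injective fun k : ℕ => (k : ℤ) * d :=
    (mul_left_injective₀ hd).comp Nat.cast_injective
  obtain ⟨-, ⟨k, rfl⟩, hk⟩ := (Set.infinite_range_of_injective hinj).exists_notMem_finset
    ((s ×ˢ s).image fun p => p.2 - p.1)
  have hdisj : Disjoint (s : Set ℤ) ((· + k * d) '' s) := by
    rw [Set.disjoint_left]
    rintro _ hm ⟨m', hm', rfl⟩
    exact hk (Finset.mem_image.2 ⟨(m', m' + k * d), Finset.mk_mem_product hm' hm, by simp⟩)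
  have hgvk : g * v ^ k = g := by
    clear hk hdisj
    induction k with
    | zero => simp
    | succ k ih => rw [pow_succ, ← mul_assoc, ih, hgv]
  have hvk : (v ^ k : A) ∈ conjEigenspace u (q ^ (k * d)) := by
    rw [mul_comm, zpow_mul, zpow_natCast]
    exact pow_le_conjEigenspace le_rfl k (Submodule.pow_mem_pow _ hv k)
  have hshift : ⨆ m ∈ s, conjEigenspace u (q ^ m)
      ≤ (⨆ m ∈ (· + k * d) '' (s : Set ℤ), conjEigenspace u (q ^ m)).comap
        (LinearMap.mulRight F (v ^ k : A)) :=
    iSup₂_le fun m hm x hx =>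
      Submodule.mem_iSup_of_mem (m + k * d) (Submodule.mem_iSup_of_mem ⟨m, hm, rfl⟩ (by
        rw [zpow_add₀ hq₀]; exact mul_mem_conjEigenspace hx hvk))
  exact Submodule.disjoint_def.1
    ((iSupIndep_conjEigenspace_zpow hq₀ hq u).disjoint_biSup_biSup hdisj) g hs
    (hgvk ▸ hshift hs)

end Grading

section Hecke

namespace DAHARep

variable {F A : Type*} [Field F] [Ring A] [Algebra F A] {N : ℕ} {q κ : F}
  (ρ : DAHARep F A N q κ)

/-- The affine Hecke subalgebra, generated by the `T_k` and `π^{±1}`. -/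
def affineHecke : Subalgebra F A :=
  Algebra.adjoin F {x | (∃ k < N, x = ρ.T k) ∨ x = ρ.P ∨ x = ↑ρ.P⁻¹}

/-- The units of the affine Hecke subalgebra. -/
def heckeUnits : Subgroup Aˣ := ρ.affineHecke.toSubmonoid.units

lemma mem_affineHecke_of_mem_heckeUnits {u : Aˣ} (hu : u ∈ ρ.heckeUnits) :
    (u : A) ∈ ρ.affineHecke :=
  ((Submonoid.mem_units_iff _ u).1 hu).1

lemma P_mem_heckeUnits : ρ.P ∈ ρ.heckeUnits :=
  (Submonoid.mem_units_iff _ _).2 ⟨Algebra.subset_adjoin (Or.inr (Or.inl rfl)),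
    Algebra.subset_adjoin (Or.inr (Or.inr rfl))⟩

lemma T_mem_units {S : Subalgebra F A} {k : ℕ} (hk : k < N) (hT : (ρ.T k : A) ∈ S) :
    ρ.T k ∈ S.toSubmonoid.units :=
  (Submonoid.mem_units_iff _ _).2 ⟨hT,
    ρ.inv_T hk ▸ S.add_mem hT (S.smul_mem S.one_mem κ)⟩

lemma T_mem_heckeUnits {k : ℕ} (hk : k < N) : ρ.T k ∈ ρ.heckeUnits :=
  ρ.T_mem_units hk (Algebra.subset_adjoin (Or.inl ⟨k, hk, rfl⟩))

lemma aF_mem_heckeUnits {s l : ℕ} (h : s + l ≤ N) : aF ρ.T s l ∈ ρ.heckeUnits :=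
  aF_mem fun _ hk => ρ.T_mem_heckeUnits (by omega)

lemma Y_mem_heckeUnits {i : ℕ} (hi : i ≤ N) : ρ.Y i ∈ ρ.heckeUnits :=
  mul_mem (mul_mem (ρ.aF_mem_heckeUnits (by omega)) ρ.P_mem_heckeUnits)
    (aF_mem fun _ hk => inv_mem (ρ.T_mem_heckeUnits (by omega)))

variable {ρ} in
lemma mul_mem_mul_affineHecke {V : Submodule F A} {v : A} {u : Aˣ} (hv : v ∈ V)
    (hu : u ∈ ρ.heckeUnits) : v * u ∈ V * Subalgebra.toSubmodule ρ.affineHecke :=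
  Submodule.mul_mem_mul hv (ρ.mem_affineHecke_of_mem_heckeUnits hu)

lemma T_mul_mem_mul_affineHecke {k : ℕ} (hk : k < N) {V : Submodule F A} {a b : A} (ha : a ∈ V)
    (hb : b ∈ V) (h : ρ.T k * a * ρ.T k = b) :
    ρ.T k * a ∈ V * Subalgebra.toSubmodule ρ.affineHecke ∧
      ρ.T k * b ∈ V * Subalgebra.toSubmodule ρ.affineHecke := by
  have hTk := ρ.T_mem_heckeUnits hk
  have hTa : ρ.T k * a = b * ↑(ρ.T k)⁻¹ := by rw [← h, Units.mul_inv_cancel_right]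
  have hsq : (ρ.T k * ρ.T k : A) = 1 - κ • (ρ.T k : A) := by
    rw [eq_sub_iff_add_eq, ← mul_one (ρ.T k : A), ← mul_smul_comm, mul_one, ← mul_add, ← ρ.inv_T hk,
      Units.mul_inv]
  have hTb : ρ.T k * b = a * ρ.T k - κ • (b * (1 : Aˣ)) := by
    rw [← h, ← mul_assoc, ← mul_assoc, hsq]
    simp only [sub_mul, one_mul, smul_mul_assoc, Units.val_one, mul_one]
  rw [hTa, hTb]
  exact ⟨mul_mem_mul_affineHecke hb (inv_mem hTk), sub_mem (mul_mem_mul_affineHecke ha hTk)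
    (Submodule.smul_mem _ κ (mul_mem_mul_affineHecke hb (one_mem _)))⟩

lemma affineHecke_mul_span_le {V : ℕ → A} {c : F} (hc : c ≠ 0)
    (hT : ∀ k < N, ρ.T k * V k * ρ.T k = V (k + 1) ∨ ρ.T k * V (k + 1) * ρ.T k = V k)
    (hTcomm : ∀ k < N, ∀ j ≤ N, j ≠ k → j ≠ k + 1 → Commute (ρ.T k : A) (V j))
    (hP : ∀ j < N, SemiconjBy (ρ.P : A) (V (j + 1)) (V j))
    (hP₀ : ρ.P * V 0 = c • (V N * ρ.P)) :
    Subalgebra.toSubmodule ρ.affineHecke * Submodule.span F (V '' Set.Iic N)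
      ≤ Submodule.span F (V '' Set.Iic N) * Subalgebra.toSubmodule ρ.affineHecke := by
  have hV {j : ℕ} (hj : j ≤ N) : V j ∈ Submodule.span F (V '' Set.Iic N) :=
    Submodule.subset_span ⟨j, hj, rfl⟩
  have hPmem := ρ.P_mem_heckeUnits
  refine adjoin_mul_span_le ?_
  rintro _ (⟨k, hk, rfl⟩ | rfl | rfl) _ ⟨j, hj : j ≤ N, rfl⟩
  · have hTk := (hT k hk).elim (ρ.T_mul_mem_mul_affineHecke hk (hV hk.le) (hV hk))
      fun h => (ρ.T_mul_mem_mul_affineHecke hk (hV hk) (hV hk.le) h).symm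
    by_cases hjk : j = k
    · exact hjk ▸ hTk.1
    by_cases hjk' : j = k + 1
    · exact hjk' ▸ hTk.2
    · rw [(hTcomm k hk j hj hjk hjk').eq]
      exact mul_mem_mul_affineHecke (hV hj) (ρ.T_mem_heckeUnits hk)
  · cases j with
    | zero =>
      rw [hP₀]
      exact Submodule.smul_mem _ c (mul_mem_mul_affineHecke (hV le_rfl) hPmem)
    | succ j =>
      rw [(hP j hj).eq]
      exact mul_mem_mul_affineHecke (hV (by omega)) hPmem
  · rcases hj.lt_or_eq with hj | rfl
    · rw [show (↑ρ.P⁻¹ * V j : A) = V (j + 1) * ↑ρ.P⁻¹ by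
        rw [Units.inv_mul_eq_iff_eq_mul, ← mul_assoc, (hP j hj).eq, Units.mul_inv_cancel_right]]
      exact mul_mem_mul_affineHecke (hV hj) (inv_mem hPmem)
    · rw [show (↑ρ.P⁻¹ * V j : A) = c⁻¹ • (V 0 * ↑ρ.P⁻¹) by
        rw [Units.inv_mul_eq_iff_eq_mul, mul_smul_comm, ← mul_assoc, hP₀, smul_mul_assoc,
          Units.mul_inv_cancel_right, inv_smul_smul₀ hc]]
      exact Submodule.smul_mem _ _ (mul_mem_mul_affineHecke (hV (Nat.zero_le _)) (inv_mem hPmem))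

/-- The span of `X_0, …, X_N`. -/
def spanX : Submodule F A := Submodule.span F ((fun i => (ρ.X i : A)) '' Set.Iic N)

/-- The span of `D_0, …, D_N`. -/
def spanD : Submodule F A := Submodule.span F (ρ.D '' Set.Iic N)

variable {ρ} in
lemma X_mem_spanX {i : ℕ} (hi : i ≤ N) : (ρ.X i : A) ∈ ρ.spanX :=
  Submodule.subset_span ⟨i, hi, rfl⟩

variable {ρ} in
lemma D_mem_spanD {i : ℕ} (hi : i ≤ N) : ρ.D i ∈ ρ.spanD :=
  Submodule.subset_span ⟨i, hi, rfl⟩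

lemma affineHecke_mul_spanX_le :
    Subalgebra.toSubmodule ρ.affineHecke * ρ.spanX
      ≤ ρ.spanX * Subalgebra.toSubmodule ρ.affineHecke :=
  ρ.affineHecke_mul_span_le ρ.q_ne_zero
    (fun k hk => Or.inl (by simpa using congrArg Units.val (ρ.T_mul_X_mul_T hk)))
    (fun _ hk _ hj hjk hjk' => (ρ.commute_T_X hk hj hjk hjk').units_val)
    (fun _ hj => (ρ.P_X_succ hj).units_val) ρ.P_mul_X_zero

lemma affineHecke_mul_spanD_le :
    Subalgebra.toSubmodule ρ.affineHecke * ρ.spanD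
      ≤ ρ.spanD * Subalgebra.toSubmodule ρ.affineHecke :=
  ρ.affineHecke_mul_span_le (inv_ne_zero ρ.q_ne_zero)
    (fun _ hk => Or.inr (ρ.D_eq_T_mul_D_mul_T hk).symm)
    (fun _ hk _ hj => ρ.commute_T_D hk hj) (fun _ hj => ρ.P_D_succ hj) ρ.P_mul_D_zero

lemma P_mul_inv_dF_mul_X {i : ℕ} (hi : i ≤ N) :
    (ρ.P * ↑(dF ρ.T 0 i)⁻¹ * ρ.X i : A) = q • (ρ.X N * (ρ.P * aF ρ.T 0 i : Aˣ) : A) := by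
  have hX : (dF ρ.T 0 i)⁻¹ * ρ.X i = ρ.X 0 * aF ρ.T 0 i := by rw [ρ.X_eq hi]; group
  calc (ρ.P * ↑(dF ρ.T 0 i)⁻¹ * ρ.X i : A)
      = ρ.P * (((dF ρ.T 0 i)⁻¹ * ρ.X i : Aˣ) : A) := by rw [Units.val_mul, mul_assoc]
    _ = q • (ρ.X N * (ρ.P * aF ρ.T 0 i : Aˣ) : A) := by
      rw [hX, Units.val_mul, ← mul_assoc, ρ.P_mul_X_zero, smul_mul_assoc, Units.val_mul, mul_assoc]

lemma Y_last_mul_X_last :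
    (ρ.Y N * ρ.X N : A) = q • (ρ.X N * (ρ.P * aF ρ.T 0 N : Aˣ) : A) := by
  rw [← ρ.P_mul_inv_dF_mul_X le_rfl, Y_last, Units.val_mul]

lemma inv_Y_last_mul_X_last :
    (↑(ρ.Y N)⁻¹ * ρ.X N : A) = q⁻¹ • (ρ.X N * ↑(ρ.P * aF ρ.T 0 N)⁻¹ : A) := by
  rw [Units.inv_mul_eq_iff_eq_mul, mul_smul_comm, ← mul_assoc, Y_last_mul_X_last, smul_mul_assoc,
    Units.mul_inv_cancel_right, inv_smul_smul₀ ρ.q_ne_zero]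

lemma Y_last_mul_X (ρ : DAHARep F A (N + 1) q κ) :
    (ρ.Y (N + 1) * ρ.X N : A) = ρ.X N * ρ.Y (N + 1)
      + (κ * q) • (ρ.X (N + 1) * (ρ.P * aF ρ.T 0 N : Aˣ) : A) := by
  have hN := N.lt_succ_self
  set Δ := dF ρ.T 0 N
  have hY : ρ.Y (N + 1) = ρ.P * Δ⁻¹ * (ρ.T N)⁻¹ := by
    rw [Y_last, dF_succ_left, zero_add, mul_inv_rev, mul_assoc]
  have hT : (↑(ρ.T N)⁻¹ * ρ.X N : A) = ρ.X (N + 1) * ↑(ρ.T N)⁻¹ + κ • (ρ.X N : A) := by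
    have h : ρ.T N * ρ.X N = ρ.X (N + 1) * (ρ.T N)⁻¹ := by rw [← ρ.T_mul_X_mul_T hN]; group
    nth_rw 1 [ρ.inv_T hN]
    rw [add_mul, smul_mul_assoc, one_mul, ← Units.val_mul, h, Units.val_mul]
  have hmove : ρ.P * Δ⁻¹ * ρ.X (N + 1) = ρ.X N * (ρ.P * Δ⁻¹) := by
    have hΔ : Commute Δ (ρ.X (N + 1)) :=
      (commute_dF fun k _ _ =>
        (ρ.commute_T_X (by omega) le_rfl (by omega) (by omega)).symm).symm
    exact ((ρ.P_X_succ hN).mul_left hΔ.inv_left).eq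
  calc (ρ.Y (N + 1) * ρ.X N : A)
      = (ρ.P * Δ⁻¹ : Aˣ) * (↑(ρ.T N)⁻¹ * ρ.X N) := by rw [hY, Units.val_mul _ (ρ.T N)⁻¹, mul_assoc]
    _ = ((ρ.P * Δ⁻¹ * ρ.X (N + 1) * (ρ.T N)⁻¹ : Aˣ) : A) + κ • (ρ.P * ↑Δ⁻¹ * ρ.X N : A) := by
      rw [hT, mul_add, mul_smul_comm]; simp only [Units.val_mul, mul_assoc]
    _ = ρ.X N * ρ.Y (N + 1) + (κ * q) • (ρ.X (N + 1) * (ρ.P * aF ρ.T 0 N : Aˣ) : A) := by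
      rw [hmove, ρ.P_mul_inv_dF_mul_X N.le_succ, smul_smul, mul_assoc (ρ.X N), ← hY, Units.val_mul]

end DAHARep

end Hecke

section DoubleCentralizer

namespace DAHARep

variable {F A : Type*} [Field F] [Ring A] [Algebra F A] {N : ℕ} {q κ : F}
  (ρ : DAHARep F A N q κ)

lemma X_last_mul_D_last_mem : ρ.X N * ρ.D N ∈ ρ.affineHecke := by
  have hY := ρ.Y_mem_heckeUnits (le_refl N)
  rw [D_last, mul_smul_comm, Units.mul_inv_cancel_left]
  exact Subalgebra.smul_mem _ (sub_mem (ρ.mem_affineHecke_of_mem_heckeUnits hY)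
    (ρ.mem_affineHecke_of_mem_heckeUnits (inv_mem hY))) _

lemma D_last_mul_X_last_mem : ρ.D N * ρ.X N ∈ ρ.affineHecke := by
  set Z := ρ.P * aF ρ.T 0 N
  have hZ : Z ∈ ρ.heckeUnits := mul_mem ρ.P_mem_heckeUnits (ρ.aF_mem_heckeUnits (by omega))
  have heq : ρ.D N * ρ.X N = (q - q⁻¹)⁻¹ • (q • (Z : A) - q⁻¹ • (↑Z⁻¹ : A)) := by
    rw [D_last, smul_mul_assoc, mul_assoc, sub_mul, Y_last_mul_X_last, inv_Y_last_mul_X_last,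
      mul_sub, mul_smul_comm, mul_smul_comm, Units.inv_mul_cancel_left, Units.inv_mul_cancel_left]
  rw [heq]
  exact Subalgebra.smul_mem _ (sub_mem
    (Subalgebra.smul_mem _ (ρ.mem_affineHecke_of_mem_heckeUnits hZ) q)
    (Subalgebra.smul_mem _ (ρ.mem_affineHecke_of_mem_heckeUnits (inv_mem hZ)) q⁻¹)) _

lemma D_last_mul_X_sub_mem (ρ : DAHARep F A (N + 1) q κ) :
    ρ.D (N + 1) * ρ.X N - ρ.X N * ρ.D (N + 1) ∈ ρ.affineHecke := by
  set X := ρ.X (N + 1)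
  set Y := ρ.Y (N + 1)
  set Z := ρ.P * aF ρ.T 0 N
  set Z' := ρ.P * aF ρ.T 0 (N + 1)
  have hY : Y ∈ ρ.heckeUnits := ρ.Y_mem_heckeUnits le_rfl
  have hZ : Z ∈ ρ.heckeUnits := mul_mem ρ.P_mem_heckeUnits (ρ.aF_mem_heckeUnits (by omega))
  have hZ' : Z' ∈ ρ.heckeUnits := mul_mem ρ.P_mem_heckeUnits (ρ.aF_mem_heckeUnits (by omega))
  have hXX : (ρ.X N * ↑X⁻¹ : A) = ↑X⁻¹ * ρ.X N :=
    (ρ.commute_X N.le_succ le_rfl).inv_right.units_val.eq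
  have hYX : (Y * ρ.X N : A) - ρ.X N * Y = (κ * q) • (X * Z : A) := by
    rw [ρ.Y_last_mul_X, add_sub_cancel_left]
  have hinvYX : (↑Y⁻¹ * ρ.X N : A) - ρ.X N * ↑Y⁻¹ = -(κ • (X * (Z'⁻¹ * Z * Y⁻¹ : Aˣ) : A)) := by
    calc (↑Y⁻¹ * ρ.X N : A) - ρ.X N * ↑Y⁻¹ = -(↑Y⁻¹ * (Y * ρ.X N - ρ.X N * Y) * ↑Y⁻¹) := by
          rw [mul_sub, sub_mul, Units.inv_mul_cancel_left]
          simp only [mul_assoc, Units.mul_inv, mul_one, neg_sub]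
      _ = -(κ • (X * (Z'⁻¹ * Z * Y⁻¹ : Aˣ) : A)) := by
          rw [hYX, mul_smul_comm, ← mul_assoc, ρ.inv_Y_last_mul_X_last, smul_mul_assoc,
            smul_mul_assoc, smul_mul_assoc, smul_smul, mul_assoc κ, mul_inv_cancel₀ ρ.q_ne_zero,
            mul_one]
          simp only [Units.val_mul, mul_assoc, Z, Z', X]
  have heq : ρ.D (N + 1) * ρ.X N - ρ.X N * ρ.D (N + 1)
      = (q - q⁻¹)⁻¹ • ((κ * q) • (Z : A) + κ • ((Z'⁻¹ * Z * Y⁻¹ : Aˣ) : A)) := by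
    calc ρ.D (N + 1) * ρ.X N - ρ.X N * ρ.D (N + 1)
        = (q - q⁻¹)⁻¹ • (↑X⁻¹ * ((Y * ρ.X N - ρ.X N * Y)
          - (↑Y⁻¹ * ρ.X N - ρ.X N * ↑Y⁻¹))) := by
          rw [D_last, smul_mul_assoc, mul_smul_comm, ← smul_sub, ← mul_assoc (ρ.X N : A), hXX]
          congr 1
          noncomm_ring
      _ = _ := by
          rw [hYX, hinvYX, sub_neg_eq_add, mul_add, mul_smul_comm, mul_smul_comm,
            Units.inv_mul_cancel_left, Units.inv_mul_cancel_left]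
  rw [heq]
  exact Subalgebra.smul_mem _ (add_mem
    (Subalgebra.smul_mem _ (ρ.mem_affineHecke_of_mem_heckeUnits hZ) _)
    (Subalgebra.smul_mem _ (ρ.mem_affineHecke_of_mem_heckeUnits
      (mul_mem (mul_mem (inv_mem hZ') hZ) (inv_mem hY))) _)) _

/-- `M` is a bimodule over the affine Hecke subalgebra. -/
structure IsBimodule (M : Submodule F A) : Prop where
  left : Subalgebra.toSubmodule ρ.affineHecke * M ≤ M
  right : M * Subalgebra.toSubmodule ρ.affineHecke ≤ M

variable {ρ}

lemma IsBimodule.mul_mem {M : Submodule F A} (hM : ρ.IsBimodule M) {u v : Aˣ} {m : A}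
    (hu : u ∈ ρ.heckeUnits) (hm : m ∈ M) (hv : v ∈ ρ.heckeUnits) : u * m * v ∈ M :=
  hM.right (Submodule.mul_mem_mul
    (hM.left (Submodule.mul_mem_mul (ρ.mem_affineHecke_of_mem_heckeUnits hu) hm))
    (ρ.mem_affineHecke_of_mem_heckeUnits hv))

lemma IsBimodule.mem_of_mem_last {M : Submodule F A} (hM : ρ.IsBimodule M) {B : ℕ → ℕ → A}
    (hT : ∀ j, j + 1 < N → ρ.T j * B N j * ρ.T j = B N (j + 1))
    (hP : ∀ i < N, ∀ j < N, SemiconjBy (ρ.P : A) (B (i + 1) (j + 1)) (B i j))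
    (hP₀ : ∀ i < N, ρ.P * B (i + 1) 0 = q • (B i N * ρ.P))
    (hlast : B N N ∈ M) (hpenult : 0 < N → B N (N - 1) ∈ M) {i j : ℕ} (hi : i ≤ N) (hj : j ≤ N) :
    B i j ∈ M := by
  have hPmem := ρ.P_mem_heckeUnits
  induction hi using Nat.decreasingInduction generalizing j with
  | self =>
    rcases hj.lt_or_eq with hj | rfl
    · refine Nat.decreasingInduction (motive := fun j _ => B N j ∈ M) (fun j hj ih => ?_)
        (hpenult (by omega)) (Nat.le_sub_one_of_lt hj)
      have hTj := inv_mem (ρ.T_mem_heckeUnits (show j < N by omega))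
      have hB : B N j = ↑(ρ.T j)⁻¹ * B N (j + 1) * ↑(ρ.T j)⁻¹ := by
        rw [← hT j (by omega), mul_assoc, Units.mul_inv_cancel_right, Units.inv_mul_cancel_left]
      exact hB ▸ hM.mul_mem hTj ih hTj
    · exact hlast
  | of_succ i hi ih =>
    rcases hj.lt_or_eq with hjN | rfl
    · have hB : B i j = ρ.P * B (i + 1) (j + 1) * ↑ρ.P⁻¹ := by
        rw [(hP i hi j hjN).eq, Units.mul_inv_cancel_right]
      exact hB ▸ hM.mul_mem hPmem (ih hjN) (inv_mem hPmem)
    · have hB : B i j = q⁻¹ • (ρ.P * B (i + 1) 0 * ↑ρ.P⁻¹) := by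
        rw [hP₀ i hi, smul_mul_assoc, Units.mul_inv_cancel_right, inv_smul_smul₀ ρ.q_ne_zero]
      exact hB ▸ M.smul_mem _ (hM.mul_mem hPmem (ih (Nat.zero_le _)) (inv_mem hPmem))

lemma IsBimodule.mul_X_D_mem {M : Submodule F A} (hM : ρ.IsBimodule M)
    (hle : Subalgebra.toSubmodule ρ.affineHecke ≤ M) (h : 0 < N → ρ.X (N - 1) * ρ.D N ∈ M)
    {i j : ℕ} (hi : i ≤ N) (hj : j ≤ N) : ρ.X i * ρ.D j ∈ M ∧ ρ.D j * ρ.X i ∈ M := by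
  have hTXT {k : ℕ} (hk : k < N) : (ρ.T k * ρ.X k * ρ.T k : A) = ρ.X (k + 1) := by
    simpa using congrArg Units.val (ρ.T_mul_X_mul_T hk)
  have hPX {k : ℕ} (hk : k < N) : SemiconjBy (ρ.P : A) (ρ.X (k + 1)) (ρ.X k) :=
    (ρ.P_X_succ hk).units_val
  have h' (hN : 0 < N) : ρ.D N * ρ.X (N - 1) ∈ M := by
    obtain ⟨N, rfl⟩ : ∃ m, N = m + 1 := ⟨N - 1, by omega⟩
    simpa using add_mem (hle ρ.D_last_mul_X_sub_mem) (h hN)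
  refine ⟨hM.mem_of_mem_last (B := fun j i => ρ.X i * ρ.D j) (fun k hk => ?_)
      (fun j hj i hi => (hPX hi).mul_right (ρ.P_D_succ hj)) (fun j hj => ?_)
      (hle ρ.X_last_mul_D_last_mem) h hj hi,
    hM.mem_of_mem_last (B := fun j i => ρ.D j * ρ.X i) (fun k hk => ?_)
      (fun j hj i hi => (ρ.P_D_succ hj).mul_right (hPX hi)) (fun j hj => ?_)
      (hle ρ.D_last_mul_X_last_mem) h' hj hi⟩
  · rw [← hTXT (by omega), mul_assoc, mul_assoc _ (ρ.D N), ← (ρ.commute_T_D_last hk).eq]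
    simp only [mul_assoc]
  · rw [← mul_assoc, ρ.P_mul_X_zero, smul_mul_assoc, mul_assoc, (ρ.P_D_succ hj).eq, mul_assoc]
  · rw [← hTXT (by omega), ← mul_assoc, (ρ.commute_T_D_last hk).eq]
    simp only [mul_assoc]
  · rw [← mul_assoc, (ρ.P_D_succ hj).eq, mul_assoc, ρ.P_mul_X_zero, mul_smul_comm, mul_assoc]

end DAHARep

end DoubleCentralizer

section Centralizer

section OrderedMonoid

variable {M : Type*} [Monoid M] [Preorder M] [MulLeftMono M] [MulRightMono M] {B E U V : M}

lemma mul_pow_le_pow_mul (h : B * V ≤ V * B) (d : ℕ) : B * V ^ d ≤ V ^ d * B := by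
  induction d with
  | zero => simp
  | succ d ih =>
    calc B * V ^ (d + 1) = B * V ^ d * V := by rw [pow_succ, mul_assoc]
      _ ≤ V ^ d * (B * V) := by rw [← mul_assoc]; exact mul_le_mul_left ih V
      _ ≤ V ^ d * (V * B) := mul_le_mul_right h _
      _ = V ^ (d + 1) * B := by rw [pow_succ, mul_assoc]

lemma mul_pow_mul_le (hE : E * E ≤ E) (h : E * V ≤ V * E) (d : ℕ) :
    E * (V ^ d * E) ≤ V ^ d * E := by
  calc E * (V ^ d * E) = E * V ^ d * E := (mul_assoc _ _ _).symm
    _ ≤ V ^ d * E * E := mul_le_mul_left (mul_pow_le_pow_mul h d) E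
    _ ≤ V ^ d * E := by rw [mul_assoc]; exact mul_le_mul_right hE _

lemma mul_pow_succ_mul_le (hUV : U * V ≤ E) (hE : E * E ≤ E) (h : E * V ≤ V * E) (d : ℕ) :
    U * (V ^ (d + 1) * E) ≤ V ^ d * E := by
  calc U * (V ^ (d + 1) * E) = U * V * (V ^ d * E) := by simp only [pow_succ', mul_assoc]
    _ ≤ E * (V ^ d * E) := mul_le_mul_left hUV _
    _ ≤ V ^ d * E := mul_pow_mul_le hE h d

end OrderedMonoid

namespace DAHARep

variable {F A : Type*} [Field F] [Ring A] [Algebra F A] {N : ℕ} {q κ : F}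
  (ρ : DAHARep F A N q κ)

/-- The subalgebra `ℍ^{gl}`, generated by the `T_k`, the `Y_i^{±1}` and the `X_i D_j`, `i ≠ j`. -/
def hgl : Subalgebra F A :=
  Algebra.adjoin F {x | (∃ k < N, x = ρ.T k) ∨ (∃ i ≤ N, x = ρ.Y i ∨ x = ↑(ρ.Y i)⁻¹) ∨
    ∃ i ≤ N, ∃ j ≤ N, i ≠ j ∧ x = ρ.X i * ρ.D j}

/-- The subalgebra `𝔄`, generated by the `T_k`, the `X_i`, the `D_i` and the `Y_i^{±1}`. -/
def afr : Subalgebra F A :=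
  Algebra.adjoin F {x | (∃ k < N, x = ρ.T k) ∨
    ∃ i ≤ N, x = ρ.X i ∨ x = ρ.D i ∨ x = ρ.Y i ∨ x = ↑(ρ.Y i)⁻¹}

lemma affineHecke_le_hgl : ρ.affineHecke ≤ ρ.hgl := by
  have hT {k : ℕ} (hk : k < N) : (ρ.T k : A) ∈ ρ.hgl :=
    Algebra.subset_adjoin (Or.inl ⟨k, hk, rfl⟩)
  have hY : ρ.Y N ∈ ρ.hgl.toSubmonoid.units := (Submonoid.mem_units_iff _ _).2
    ⟨Algebra.subset_adjoin (Or.inr (Or.inl ⟨N, le_rfl, Or.inl rfl⟩)),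
      Algebra.subset_adjoin (Or.inr (Or.inl ⟨N, le_rfl, Or.inr rfl⟩))⟩
  have hP : ρ.P ∈ ρ.hgl.toSubmonoid.units := by
    rw [show ρ.P = ρ.Y N * dF ρ.T 0 N by rw [Y_last, inv_mul_cancel_right]]
    exact mul_mem hY (dF_mem fun k hk => ρ.T_mem_units (by omega) (hT (by omega)))
  refine Algebra.adjoin_le ?_
  rintro _ (⟨k, hk, rfl⟩ | rfl | rfl)
  · exact hT hk
  · exact ((Submonoid.mem_units_iff _ _).1 hP).1
  · exact ((Submonoid.mem_units_iff _ _).1 hP).2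

lemma isBimodule_hgl : ρ.IsBimodule (Subalgebra.toSubmodule ρ.hgl) where
  left := (mul_le_mul_left (Subalgebra.toSubmodule.monotone ρ.affineHecke_le_hgl) _).trans_eq
    ρ.hgl.isIdempotentElem_toSubmodule.eq
  right := (mul_le_mul_right (Subalgebra.toSubmodule.monotone ρ.affineHecke_le_hgl) _).trans_eq
    ρ.hgl.isIdempotentElem_toSubmodule.eq

variable {ρ} in
lemma IsBimodule.spanX_mul_spanD_le {M : Submodule F A} (hM : ρ.IsBimodule M)
    (hle : Subalgebra.toSubmodule ρ.affineHecke ≤ M) (h : 0 < N → ρ.X (N - 1) * ρ.D N ∈ M) :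
    ρ.spanX * ρ.spanD ≤ M ∧ ρ.spanD * ρ.spanX ≤ M := by
  simp only [spanX, spanD, Submodule.span_mul_span, Submodule.span_le]
  constructor
  · rintro _ ⟨_, ⟨i, hi, rfl⟩, _, ⟨j, hj, rfl⟩, rfl⟩
    exact (hM.mul_X_D_mem hle h hi hj).1
  · rintro _ ⟨_, ⟨j, hj, rfl⟩, _, ⟨i, hi, rfl⟩, rfl⟩
    exact (hM.mul_X_D_mem hle h hi hj).2

lemma spanX_mul_spanD_le_hgl :
    ρ.spanX * ρ.spanD ≤ Subalgebra.toSubmodule ρ.hgl ∧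
      ρ.spanD * ρ.spanX ≤ Subalgebra.toSubmodule ρ.hgl :=
  ρ.isBimodule_hgl.spanX_mul_spanD_le (Subalgebra.toSubmodule.monotone ρ.affineHecke_le_hgl)
    fun hN => Algebra.subset_adjoin
      (Or.inr (Or.inr ⟨N - 1, N.sub_le 1, N, le_rfl, by omega, rfl⟩))

lemma isBimodule_spanD_mul_spanX_sup :
    ρ.IsBimodule (ρ.spanD * ρ.spanX * Subalgebra.toSubmodule ρ.affineHecke
      ⊔ Subalgebra.toSubmodule ρ.affineHecke) where
  left := by
    set H := Subalgebra.toSubmodule ρ.affineHecke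
    have hH : H * H = H := ρ.affineHecke.isIdempotentElem_toSubmodule.eq
    rw [Submodule.mul_sup, hH]
    refine sup_le_sup_right ?_ H
    have hHD : H * ρ.spanD ≤ ρ.spanD * H := ρ.affineHecke_mul_spanD_le
    have hHX : H * ρ.spanX ≤ ρ.spanX * H := ρ.affineHecke_mul_spanX_le
    calc H * (ρ.spanD * ρ.spanX * H) = H * ρ.spanD * (ρ.spanX * H) := by simp only [mul_assoc]
      _ ≤ ρ.spanD * H * (ρ.spanX * H) := mul_le_mul_left hHD _
      _ = ρ.spanD * (H * ρ.spanX * H) := by simp only [mul_assoc]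
      _ ≤ ρ.spanD * (ρ.spanX * H * H) := mul_le_mul_right (mul_le_mul_left hHX _) _
      _ = ρ.spanD * ρ.spanX * H := by rw [mul_assoc _ H, hH, mul_assoc]
  right := by
    rw [Submodule.sup_mul, mul_assoc, ρ.affineHecke.isIdempotentElem_toSubmodule.eq]

lemma spanX_mul_spanD_le : ρ.spanX * ρ.spanD
    ≤ ρ.spanD * ρ.spanX * Subalgebra.toSubmodule ρ.affineHecke
      ⊔ Subalgebra.toSubmodule ρ.affineHecke := by
  refine (ρ.isBimodule_spanD_mul_spanX_sup.spanX_mul_spanD_le le_sup_right fun hN => ?_).1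
  obtain ⟨N, rfl⟩ : ∃ m, N = m + 1 := ⟨N - 1, by omega⟩
  rw [Nat.add_sub_cancel, ← sub_sub_cancel (ρ.D (N + 1) * ρ.X N : A) (ρ.X N * ρ.D (N + 1))]
  refine sub_mem (Submodule.mem_sup_left ?_)
    (Submodule.mem_sup_right ρ.D_last_mul_X_sub_mem)
  simpa using Submodule.mul_mem_mul (Submodule.mul_mem_mul (D_mem_spanD (ρ := ρ) le_rfl)
    (X_mem_spanX (ρ := ρ) N.le_succ)) ((Subalgebra.mem_toSubmodule _).2 ρ.affineHecke.one_mem)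

lemma T_mem_affineHecke {k : ℕ} (hk : k < N) : (ρ.T k : A) ∈ ρ.affineHecke :=
  ρ.mem_affineHecke_of_mem_heckeUnits (ρ.T_mem_heckeUnits hk)

lemma Y_mem_affineHecke {i : ℕ} (hi : i ≤ N) :
    (ρ.Y i : A) ∈ ρ.affineHecke ∧ (↑(ρ.Y i)⁻¹ : A) ∈ ρ.affineHecke :=
  ⟨ρ.mem_affineHecke_of_mem_heckeUnits (ρ.Y_mem_heckeUnits hi),
    ρ.mem_affineHecke_of_mem_heckeUnits (inv_mem (ρ.Y_mem_heckeUnits hi))⟩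

lemma hgl_mul_span_le {V : Set A}
    (hH : Subalgebra.toSubmodule ρ.affineHecke * Submodule.span F V
      ≤ Submodule.span F V * Subalgebra.toSubmodule ρ.affineHecke)
    (hXD : ρ.spanX * ρ.spanD * Submodule.span F V
      ≤ Submodule.span F V * Subalgebra.toSubmodule ρ.hgl) :
    Subalgebra.toSubmodule ρ.hgl * Submodule.span F V
      ≤ Submodule.span F V * Subalgebra.toSubmodule ρ.hgl := by
  have hHecke {h v : A} (hh : h ∈ ρ.affineHecke) (hv : v ∈ V) :
      h * v ∈ Submodule.span F V * Subalgebra.toSubmodule ρ.hgl :=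
    mul_le_mul_right (Subalgebra.toSubmodule.monotone ρ.affineHecke_le_hgl) _
      (hH (Submodule.mul_mem_mul hh (Submodule.subset_span hv)))
  refine adjoin_mul_span_le ?_
  rintro _ (⟨k, hk, rfl⟩ | ⟨i, hi, rfl | rfl⟩ | ⟨i, hi, j, hj, -, rfl⟩) v hv
  · exact hHecke (ρ.T_mem_affineHecke hk) hv
  · exact hHecke (ρ.Y_mem_affineHecke hi).1 hv
  · exact hHecke (ρ.Y_mem_affineHecke hi).2 hv
  · exact hXD (Submodule.mul_mem_mul (Submodule.mul_mem_mul (X_mem_spanX hi) (D_mem_spanD hj))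
      (Submodule.subset_span hv))

lemma hgl_mul_spanX_le :
    Subalgebra.toSubmodule ρ.hgl * ρ.spanX ≤ ρ.spanX * Subalgebra.toSubmodule ρ.hgl := by
  refine ρ.hgl_mul_span_le ρ.affineHecke_mul_spanX_le ?_
  rw [mul_assoc]
  exact mul_le_mul_right ρ.spanX_mul_spanD_le_hgl.2 _

lemma hgl_mul_spanD_le :
    Subalgebra.toSubmodule ρ.hgl * ρ.spanD ≤ ρ.spanD * Subalgebra.toSubmodule ρ.hgl := by
  refine ρ.hgl_mul_span_le ρ.affineHecke_mul_spanD_le ?_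
  have hHE := Subalgebra.toSubmodule.monotone ρ.affineHecke_le_hgl
  have hEE : Subalgebra.toSubmodule ρ.hgl * _ = _ := ρ.hgl.isIdempotentElem_toSubmodule.eq
  set H := Subalgebra.toSubmodule ρ.affineHecke
  set E := Subalgebra.toSubmodule ρ.hgl
  change ρ.spanX * ρ.spanD * ρ.spanD ≤ ρ.spanD * E
  have hHD : H * ρ.spanD ≤ ρ.spanD * H := ρ.affineHecke_mul_spanD_le
  calc ρ.spanX * ρ.spanD * ρ.spanD
      ≤ (ρ.spanD * ρ.spanX * H ⊔ H) * ρ.spanD := mul_le_mul_left ρ.spanX_mul_spanD_le _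
    _ = ρ.spanD * ρ.spanX * (H * ρ.spanD) ⊔ H * ρ.spanD := by rw [Submodule.sup_mul, mul_assoc]
    _ ≤ ρ.spanD * ρ.spanX * (ρ.spanD * H) ⊔ ρ.spanD * H := by gcongr
    _ = ρ.spanD * (ρ.spanX * ρ.spanD * H) ⊔ ρ.spanD * H := by simp only [mul_assoc]
    _ ≤ ρ.spanD * (E * E) ⊔ ρ.spanD * E := by gcongr; exact ρ.spanX_mul_spanD_le_hgl.1
    _ = ρ.spanD * E := by rw [hEE, sup_idem]

/-- The part of `𝔄` of degree `m`, where the `X_i` have degree `1`, the `D_i` degree `-1` and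
`ℍ^{gl}` degree `0`. One of the two exponents is `0`. -/
def gradedPiece (m : ℤ) : Submodule F A :=
  ρ.spanX ^ m.toNat * ρ.spanD ^ (-m).toNat * Subalgebra.toSubmodule ρ.hgl

lemma gradedPiece_natCast (d : ℕ) :
    ρ.gradedPiece d = ρ.spanX ^ d * Subalgebra.toSubmodule ρ.hgl := by
  simp [gradedPiece]

lemma gradedPiece_neg_natCast (d : ℕ) :
    ρ.gradedPiece (-d) = ρ.spanD ^ d * Subalgebra.toSubmodule ρ.hgl := by
  simp [gradedPiece]

lemma gradedPiece_zero : ρ.gradedPiece 0 = Subalgebra.toSubmodule ρ.hgl := by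
  simp [gradedPiece]

lemma hgl_mul_gradedPiece_le (m : ℤ) :
    Subalgebra.toSubmodule ρ.hgl * ρ.gradedPiece m ≤ ρ.gradedPiece m := by
  have hE := ρ.hgl.isIdempotentElem_toSubmodule.eq.le
  obtain ⟨d, rfl | rfl⟩ := m.eq_nat_or_neg
  · simpa only [gradedPiece_natCast] using mul_pow_mul_le hE ρ.hgl_mul_spanX_le d
  · simpa only [gradedPiece_neg_natCast] using mul_pow_mul_le hE ρ.hgl_mul_spanD_le d

lemma spanX_mul_gradedPiece_le (m : ℤ) :
    ρ.spanX * ρ.gradedPiece m ≤ ρ.gradedPiece (m + 1) := by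
  have hpos (d : ℕ) : ρ.spanX * ρ.gradedPiece d = ρ.gradedPiece (d + 1) := by
    rw [← Nat.cast_succ, gradedPiece_natCast, gradedPiece_natCast, pow_succ', mul_assoc]
  obtain ⟨d, rfl | rfl⟩ := m.eq_nat_or_neg
  · exact (hpos d).le
  cases d with
  | zero => simpa using (hpos 0).le
  | succ d =>
    rw [show -((d + 1 : ℕ) : ℤ) + 1 = -d by simp, gradedPiece_neg_natCast,
      gradedPiece_neg_natCast]
    exact mul_pow_succ_mul_le ρ.spanX_mul_spanD_le_hgl.1 ρ.hgl.isIdempotentElem_toSubmodule.eq.le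
      ρ.hgl_mul_spanD_le d

lemma spanD_mul_gradedPiece_le (m : ℤ) :
    ρ.spanD * ρ.gradedPiece m ≤ ρ.gradedPiece (m - 1) := by
  have hneg (d : ℕ) : ρ.spanD * ρ.gradedPiece (-d) = ρ.gradedPiece (-d - 1) := by
    rw [← neg_add', ← Nat.cast_succ, gradedPiece_neg_natCast, gradedPiece_neg_natCast, pow_succ',
      mul_assoc]
  obtain ⟨d, rfl | rfl⟩ := m.eq_nat_or_neg
  · cases d with
    | zero => simpa using (hneg 0).le
    | succ d =>
      rw [show ((d + 1 : ℕ) : ℤ) - 1 = d by simp, gradedPiece_natCast, gradedPiece_natCast]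
      exact mul_pow_succ_mul_le ρ.spanX_mul_spanD_le_hgl.2
        ρ.hgl.isIdempotentElem_toSubmodule.eq.le ρ.hgl_mul_spanX_le d
  · exact (hneg d).le

lemma afr_le_iSup_gradedPiece :
    Subalgebra.toSubmodule ρ.afr ≤ ⨆ m, ρ.gradedPiece m := by
  have hstab {V : Submodule F A} {s w : A} (e : ℤ → ℤ)
      (hV : ∀ m, V * ρ.gradedPiece m ≤ ρ.gradedPiece (e m)) (hs : s ∈ V)
      (hw : w ∈ ⨆ m, ρ.gradedPiece m) : s * w ∈ ⨆ m, ρ.gradedPiece m := by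
    have hVW : V * ⨆ m, ρ.gradedPiece m ≤ ⨆ m, ρ.gradedPiece m := by
      rw [Submodule.mul_iSup]
      exact iSup_le fun m => (hV m).trans (le_iSup ρ.gradedPiece (e m))
    exact hVW (Submodule.mul_mem_mul hs hw)
  have hle := ρ.affineHecke_le_hgl
  refine adjoin_le_of_mul_mem (Submodule.mem_iSup_of_mem 0 ?_) ?_
  · rw [gradedPiece_zero]
    exact ρ.hgl.one_mem
  · rintro _ (⟨k, hk, rfl⟩ | ⟨i, hi, rfl | rfl | rfl | rfl⟩) w hw
    · exact hstab id ρ.hgl_mul_gradedPiece_le (hle (ρ.T_mem_affineHecke hk)) hw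
    · exact hstab (· + 1) ρ.spanX_mul_gradedPiece_le (X_mem_spanX hi) hw
    · exact hstab (· - 1) ρ.spanD_mul_gradedPiece_le (D_mem_spanD hi) hw
    · exact hstab id ρ.hgl_mul_gradedPiece_le (hle (ρ.Y_mem_affineHecke hi).1) hw
    · exact hstab id ρ.hgl_mul_gradedPiece_le (hle (ρ.Y_mem_affineHecke hi).2) hw

lemma commute_P_pow_T {k : ℕ} (hk : k < N) : Commute (ρ.P ^ (N + 1)) (ρ.T k) := by
  have hshift : ∀ k < N - 1, SemiconjBy ρ.P (ρ.T (k + 1)) (ρ.T k) :=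
    fun k hk => ρ.P_T_succ (by omega)
  have hdown : SemiconjBy (ρ.P ^ k) (ρ.T k) (ρ.T 0) := by
    simpa using semiconjBy_pow_of_shift hshift (i := k) (k := 0) (by omega)
  have hup : SemiconjBy (ρ.P ^ (N - 1 - k)) (ρ.T (N - 1)) (ρ.T k) := by
    simpa [show k + (N - 1 - k) = N - 1 by omega] using
      semiconjBy_pow_of_shift hshift (i := N - 1 - k) (k := k) (by omega)
  have h := (hup.mul_left (ρ.P_sq_T_zero (by omega))).mul_left hdown
  rwa [← pow_add, ← pow_add, show N - 1 - k + 2 + k = N + 1 by omega] at h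

lemma span_le_conjEigenspace_P_pow {V : ℕ → A} {c : F}
    (hP : ∀ j < N, SemiconjBy (ρ.P : A) (V (j + 1)) (V j))
    (hP₀ : ρ.P * V 0 = c • (V N * ρ.P)) :
    Submodule.span F (V '' Set.Iic N) ≤ conjEigenspace (ρ.P ^ (N + 1)) c := by
  rw [Submodule.span_le]
  rintro _ ⟨j, hj : j ≤ N, rfl⟩
  have hdown : SemiconjBy (ρ.P ^ j : A) (V j) (V 0) := by
    simpa using semiconjBy_pow_of_shift hP (i := j) (k := 0) (by omega)
  have hup : SemiconjBy (ρ.P ^ (N - j) : A) (V N) (V j) := by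
    simpa [hj] using semiconjBy_pow_of_shift hP (i := N - j) (k := j) (by omega)
  have hsplit : (ρ.P ^ (N + 1) : A) = ρ.P ^ (N - j) * ρ.P * ρ.P ^ j := by
    rw [← pow_succ, ← pow_add, show N - j + 1 + j = N + 1 by omega]
  rw [SetLike.mem_coe, mem_conjEigenspace, Units.val_pow_eq_pow_val]
  calc (ρ.P ^ (N + 1) * V j : A) = ρ.P ^ (N - j) * (ρ.P * V 0) * ρ.P ^ j := by
        rw [hsplit, mul_assoc, hdown.eq]; simp only [mul_assoc]
    _ = c • (V j * ρ.P ^ (N + 1)) := by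
        rw [hP₀, mul_smul_comm, smul_mul_assoc, ← mul_assoc, hup.eq, hsplit]
        simp only [mul_assoc]

lemma spanX_le_conjEigenspace : ρ.spanX ≤ conjEigenspace (ρ.P ^ (N + 1)) q :=
  ρ.span_le_conjEigenspace_P_pow (fun _ hj => (ρ.P_X_succ hj).units_val) ρ.P_mul_X_zero

lemma spanD_le_conjEigenspace : ρ.spanD ≤ conjEigenspace (ρ.P ^ (N + 1)) q⁻¹ :=
  ρ.span_le_conjEigenspace_P_pow (fun _ hj => ρ.P_D_succ hj) ρ.P_mul_D_zero

lemma commute_P_pow_of_mem_affineHecke {h : A} (hh : h ∈ ρ.affineHecke) :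
    Commute (↑(ρ.P ^ (N + 1)) : A) h := by
  suffices hle : ρ.affineHecke ≤ Subalgebra.centralizer F {(↑(ρ.P ^ (N + 1)) : A)} from
    hle hh _ rfl
  have hP : Commute (ρ.P ^ (N + 1)) ρ.P := (Commute.refl ρ.P).pow_left _
  refine Algebra.adjoin_le ?_
  rintro _ (⟨k, hk, rfl⟩ | rfl | rfl) _ rfl
  · exact (ρ.commute_P_pow_T hk).units_val.eq
  · exact hP.units_val.eq
  · exact hP.inv_right.units_val.eq

lemma hgl_le_conjEigenspace :
    Subalgebra.toSubmodule ρ.hgl ≤ conjEigenspace (ρ.P ^ (N + 1)) (1 : F) := by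
  have hcomm {x : A} (hx : x ∈ conjEigenspace (ρ.P ^ (N + 1)) (1 : F)) :
      x ∈ Subalgebra.centralizer F {(↑(ρ.P ^ (N + 1)) : A)} := by
    rintro _ rfl
    exact (mem_conjEigenspace_one.1 hx).eq
  suffices hle : ρ.hgl ≤ Subalgebra.centralizer F {(↑(ρ.P ^ (N + 1)) : A)} from
    fun h hh => mem_conjEigenspace_one.2 (hle hh _ rfl)
  have hHecke {h : A} (hh : h ∈ ρ.affineHecke) :=
    hcomm (mem_conjEigenspace_one.2 (ρ.commute_P_pow_of_mem_affineHecke hh))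
  refine Algebra.adjoin_le ?_
  rintro _ (⟨k, hk, rfl⟩ | ⟨i, hi, rfl | rfl⟩ | ⟨i, hi, j, hj, -, rfl⟩)
  · exact hHecke (ρ.T_mem_affineHecke hk)
  · exact hHecke (ρ.Y_mem_affineHecke hi).1
  · exact hHecke (ρ.Y_mem_affineHecke hi).2
  · refine hcomm ?_
    rw [← mul_inv_cancel₀ ρ.q_ne_zero]
    exact mul_mem_conjEigenspace (ρ.spanX_le_conjEigenspace (X_mem_spanX hi))
      (ρ.spanD_le_conjEigenspace (D_mem_spanD hj))

lemma gradedPiece_le_conjEigenspace (m : ℤ) :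
    ρ.gradedPiece m ≤ conjEigenspace (ρ.P ^ (N + 1)) (q ^ m) := by
  have hmul {V : Submodule F A} {c : F} (hV : V ≤ conjEigenspace (ρ.P ^ (N + 1)) c) (d : ℕ) :
      V ^ d * Subalgebra.toSubmodule ρ.hgl ≤ conjEigenspace (ρ.P ^ (N + 1)) (c ^ d) :=
    Submodule.mul_le.2 fun x hx y hy => by
      simpa using mul_mem_conjEigenspace (pow_le_conjEigenspace hV d hx)
        (ρ.hgl_le_conjEigenspace hy)
  obtain ⟨d, rfl | rfl⟩ := m.eq_nat_or_neg
  · simpa [gradedPiece_natCast] using hmul ρ.spanX_le_conjEigenspace d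
  · simpa [gradedPiece_neg_natCast] using hmul ρ.spanD_le_conjEigenspace d

lemma hgl_le_afr : ρ.hgl ≤ ρ.afr := by
  refine Algebra.adjoin_le ?_
  rintro _ (hT | ⟨i, hi, hY⟩ | ⟨i, hi, j, hj, -, rfl⟩)
  · exact Algebra.subset_adjoin (Or.inl hT)
  · exact Algebra.subset_adjoin (Or.inr ⟨i, hi, Or.inr (Or.inr hY)⟩)
  · exact mul_mem (Algebra.subset_adjoin (Or.inr ⟨i, hi, Or.inl rfl⟩))
      (Algebra.subset_adjoin (Or.inr ⟨j, hj, Or.inr (Or.inl rfl)⟩))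

theorem mem_hgl_iff (hq : ∀ m : ℕ, m ≠ 0 → q ^ m ≠ 1) {f : A} :
    f ∈ ρ.hgl ↔ f ∈ ρ.afr ∧ Commute (↑(ρ.P ^ (N + 1)) : A) f := by
  have hcentral {g : A} : Commute (↑(ρ.P ^ (N + 1)) : A) g
      ↔ g ∈ conjEigenspace (ρ.P ^ (N + 1)) (q ^ (0 : ℤ)) := by
    rw [zpow_zero, mem_conjEigenspace_one]
  rw [hcentral]
  refine ⟨fun hf => ⟨ρ.hgl_le_afr hf, ?_⟩, fun ⟨hf, hcomm⟩ => ?_⟩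
  · rw [zpow_zero]
    exact ρ.hgl_le_conjEigenspace hf
  · rw [← Subalgebra.mem_toSubmodule, ← gradedPiece_zero, ← iSup_inf_eq_of_iSupIndep
      (iSupIndep_conjEigenspace_zpow ρ.q_ne_zero hq _) ρ.gradedPiece_le_conjEigenspace 0]
    exact ⟨ρ.afr_le_iSup_gradedPiece hf, hcomm⟩

lemma prod_Y : ((List.range (N + 1)).map ρ.Y).prod = ρ.P ^ (N + 1) :=
  ρ.braid.prod_affineY ρ.P_T_succ ρ.commute_P_pow_T

end DAHARep

end Centralizer

section LaurentRatios

namespace DAHARep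

variable {F A : Type*} [Field F] [Ring A] [Algebra F A] {N : ℕ} {q κ : F}
  (ρ : DAHARep F A N q κ)

/-- The full double affine Hecke algebra, generated by the `T_k`, `π^{±1}` and the `X_i^{±1}`. -/
def daha : Subalgebra F A :=
  Algebra.adjoin F {x | (∃ k < N, x = ρ.T k) ∨ (x = ρ.P ∨ x = ↑ρ.P⁻¹) ∨
    ∃ i ≤ N, x = ρ.X i ∨ x = ↑(ρ.X i)⁻¹}

lemma affineHecke_le_daha : ρ.affineHecke ≤ ρ.daha :=
  Algebra.adjoin_mono fun _ hx => hx.imp_right Or.inl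

lemma afr_le_daha : ρ.afr ≤ ρ.daha := by
  have hH := ρ.affineHecke_le_daha
  refine Algebra.adjoin_le ?_
  rintro _ (⟨k, hk, rfl⟩ | ⟨i, hi, rfl | rfl | rfl | rfl⟩)
  · exact hH (ρ.T_mem_affineHecke hk)
  · exact Algebra.subset_adjoin (Or.inr (Or.inr ⟨i, hi, Or.inl rfl⟩))
  · have hdF : dF ρ.T i (N - i) ∈ ρ.heckeUnits := dF_mem fun k hk => ρ.T_mem_heckeUnits (by omega)
    have hXinv : (↑(ρ.X N)⁻¹ : A) ∈ ρ.daha :=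
      Algebra.subset_adjoin (Or.inr (Or.inr ⟨N, le_rfl, Or.inr rfl⟩))
    have hY := ρ.Y_mem_affineHecke le_rfl
    exact mul_mem (mul_mem
      (hH (ρ.mem_affineHecke_of_mem_heckeUnits (ρ.aF_mem_heckeUnits (by omega))))
      (Subalgebra.smul_mem _ (mul_mem hXinv (hH (sub_mem hY.1 hY.2))) _))
      (hH (ρ.mem_affineHecke_of_mem_heckeUnits hdF))
  · exact hH (ρ.Y_mem_affineHecke hi).1
  · exact hH (ρ.Y_mem_affineHecke hi).2

lemma commute_T_aF_X {k : ℕ} (hk : k < N) : Commute (ρ.T k) (aF ρ.X 0 (N + 1)) := by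
  have hpair : Commute (ρ.T k) (ρ.X k * ρ.X (k + 1)) := by
    have hTX : ρ.T k * ρ.X k = ρ.X (k + 1) * (ρ.T k)⁻¹ := by
      rw [← ρ.T_mul_X_mul_T hk, mul_inv_cancel_right]
    have hXT : (ρ.T k)⁻¹ * ρ.X (k + 1) = ρ.X k * ρ.T k := by
      rw [← ρ.T_mul_X_mul_T hk, mul_assoc, inv_mul_cancel_left]
    rw [Commute, SemiconjBy, ← mul_assoc, hTX, mul_assoc, hXT, ← mul_assoc,
      (ρ.commute_X (by omega) (by omega)).eq]
  obtain ⟨l, rfl⟩ : ∃ l, N = k + 1 + l := ⟨N - (k + 1), by omega⟩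
  have hne {j : ℕ} (hj : j ≤ k + 1 + l) (hjk : j ≠ k ∧ j ≠ k + 1) : Commute (ρ.T k) (ρ.X j) :=
    ρ.commute_T_X hk hj hjk.1 hjk.2
  rw [show k + 1 + l + 1 = k + (2 + l) by omega, aF_add, aF_add, aF_succ_left, aF_succ_left,
    aF_zero, mul_one, zero_add]
  exact (commute_aF fun j _ _ => hne (by omega) (by omega)).mul_right
    (hpair.mul_right (commute_aF fun j _ _ => hne (by omega) (by omega)))

lemma P_mul_aF_X : (ρ.P * aF ρ.X 0 (N + 1) : A) = q • (aF ρ.X 0 (N + 1) * ρ.P : A) := by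
  have hshift : SemiconjBy ρ.P (aF ρ.X 1 N) (aF ρ.X 0 N) :=
    semiconjBy_aF fun k hk => by rw [add_comm 1 k, zero_add]; exact ρ.P_X_succ hk
  have hcomm : Commute (ρ.X N) (aF ρ.X 0 N) :=
    commute_aF fun k _ hk => ρ.commute_X le_rfl (by omega)
  calc (ρ.P * aF ρ.X 0 (N + 1) : A) = ρ.P * ρ.X 0 * aF ρ.X 1 N := by
        rw [aF_succ_left, Units.val_mul, mul_assoc]
    _ = q • (ρ.X N * (ρ.P * aF ρ.X 1 N)) := by
        rw [ρ.P_mul_X_zero, smul_mul_assoc, mul_assoc]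
    _ = q • (aF ρ.X 0 (N + 1) * ρ.P : A) := by
        rw [hshift.units_val.eq, ← mul_assoc, hcomm.units_val.eq, aF_succ_right, zero_add,
          Units.val_mul]

lemma P_mem_conjEigenspace_aF_X :
    (ρ.P : A) ∈ conjEigenspace (aF ρ.X 0 (N + 1)) (q ^ (-1 : ℤ)) := by
  rw [mem_conjEigenspace, ρ.P_mul_aF_X, zpow_neg_one, inv_smul_smul₀ ρ.q_ne_zero]

lemma daha_le_iSup_conjEigenspace : Subalgebra.toSubmodule ρ.daha
    ≤ ⨆ m : ℤ, conjEigenspace (aF ρ.X 0 (N + 1)) (q ^ m) := by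
  have hzero {x : Aˣ} (hx : Commute x (aF ρ.X 0 (N + 1))) :
      ∃ d : ℤ, (x : A) ∈ conjEigenspace (aF ρ.X 0 (N + 1)) (q ^ d) :=
    ⟨0, by rw [zpow_zero, mem_conjEigenspace_one]; exact hx.symm.units_val⟩
  have hX {i : ℕ} (hi : i ≤ N) : Commute (ρ.X i) (aF ρ.X 0 (N + 1)) :=
    commute_aF fun j _ _ => ρ.commute_X hi (by omega)
  refine adjoin_le_iSup_conjEigenspace ρ.q_ne_zero ?_
  rintro _ (⟨k, hk, rfl⟩ | (rfl | rfl) | ⟨i, hi, rfl | rfl⟩)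
  · exact hzero (ρ.commute_T_aF_X hk)
  · exact ⟨-1, ρ.P_mem_conjEigenspace_aF_X⟩
  · refine ⟨1, ?_⟩
    simpa using inv_mem_conjEigenspace (zpow_ne_zero _ ρ.q_ne_zero) ρ.P_mem_conjEigenspace_aF_X
  · exact hzero (hX hi)
  · exact hzero (hX hi).inv_left

lemma Y_last_sq_mem_conjEigenspace :
    (↑(ρ.Y N ^ 2) : A) ∈ conjEigenspace (aF ρ.X 0 (N + 1)) (q ^ (-2 : ℤ)) := by
  have hdF : (↑(dF ρ.T 0 N)⁻¹ : A) ∈ conjEigenspace (aF ρ.X 0 (N + 1)) (1 : F) :=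
    mem_conjEigenspace_one.2
      (commute_dF fun k _ hk => (ρ.commute_T_aF_X (by omega)).symm).inv_right.units_val
  have hY : (ρ.Y N : A) ∈ conjEigenspace (aF ρ.X 0 (N + 1)) (q ^ (-1 : ℤ)) := by
    simpa [Y_last] using mul_mem_conjEigenspace ρ.P_mem_conjEigenspace_aF_X hdF
  rw [show (-2 : ℤ) = -1 + -1 by norm_num, zpow_add₀ ρ.q_ne_zero, pow_two, Units.val_mul]
  exact mul_mem_conjEigenspace hY hY

theorem commute_X_mul_inv_X (hq : ∀ m : ℕ, m ≠ 0 → q ^ m ≠ 1) {f : A} (hf : f ∈ ρ.daha)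
    (hfe : ∀ i ≤ N, Commute f (ρ.X i * ρ.D N)) {i k : ℕ} (hi : i ≤ N) (hk : k ≤ N) :
    Commute (↑(ρ.X i * (ρ.X k)⁻¹) : A) f := by
  set Y := ρ.Y N
  have hqq : q - q⁻¹ ≠ 0 := fun h => hq 2 two_ne_zero (by
    rw [pow_two]; nth_rw 2 [sub_eq_zero.1 h]; exact mul_inv_cancel₀ ρ.q_ne_zero)
  have hmem {i : ℕ} (hi : i ≤ N) : (ρ.X i : A) ∈ ρ.daha ∧ (↑(ρ.X i)⁻¹ : A) ∈ ρ.daha :=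
    ⟨Algebra.subset_adjoin (Or.inr (Or.inr ⟨i, hi, Or.inl rfl⟩)),
      Algebra.subset_adjoin (Or.inr (Or.inr ⟨i, hi, Or.inr rfl⟩))⟩
  have hconj {i : ℕ} (hi : i ≤ N) :
      ↑(ρ.X i)⁻¹ * f * ρ.X i * (↑(ρ.X N)⁻¹ * (Y - ↑Y⁻¹)) = ↑(ρ.X N)⁻¹ * (Y - ↑Y⁻¹) * f := by
    have h := (hfe i hi).eq
    rw [D_last, mul_smul_comm, mul_smul_comm, smul_mul_assoc] at h
    rw [mul_assoc, mul_assoc, Units.inv_mul_eq_iff_eq_mul,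
      smul_right_injective A (inv_ne_zero hqq) h, mul_assoc]
  set g := (↑(ρ.X i)⁻¹ * f * ρ.X i - ↑(ρ.X k)⁻¹ * f * ρ.X k) * ↑(ρ.X N)⁻¹ with hg
  have hgY : g * Y = g * ↑Y⁻¹ := by
    rw [← sub_eq_zero, ← mul_sub, hg, mul_assoc, sub_mul, hconj hi, hconj hk, sub_self]
  have hgYY : g * ↑(Y ^ 2) = g := by
    rw [pow_two, Units.val_mul, ← mul_assoc, hgY, Units.inv_mul_cancel_right]
  have hgmem : g ∈ ρ.daha :=
    mul_mem (sub_mem (mul_mem (mul_mem (hmem hi).2 hf) (hmem hi).1)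
      (mul_mem (mul_mem (hmem hk).2 hf) (hmem hk).1)) (hmem le_rfl).2
  have hg₀ : g = 0 := eq_zero_of_mul_unit_eq_self ρ.q_ne_zero hq (by norm_num)
    ρ.Y_last_sq_mem_conjEigenspace (ρ.daha_le_iSup_conjEigenspace hgmem) hgYY
  have heq : ↑(ρ.X i)⁻¹ * f * ρ.X i = ↑(ρ.X k)⁻¹ * f * ρ.X k :=
    sub_eq_zero.1 ((Units.mul_left_eq_zero _).1 hg₀)
  rw [Units.val_mul, Commute, SemiconjBy, ← mul_assoc, Units.eq_mul_inv_iff_mul_eq, mul_assoc,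
    mul_assoc, ← mul_assoc _ f, ← heq, mul_assoc, Units.mul_inv_cancel_left]

end DAHARep

end LaurentRatios

section Twist

lemma mono_mul_mono (a b : Fin n →₀ ℤ) (c d : R) :
    mono a c * mono b d = mono (a + b) (c * d) :=
  AddMonoidAlgebra.single_mul_single ..

lemma smul_mono (r : R) (a : Fin n →₀ ℤ) (c : R) : r • mono a c = mono a (r * c) :=
  AddMonoidAlgebra.smul_single ..

lemma mono_zero_one : (mono 0 1 : Laur R n) = 1 := by
  rw [mono, AddMonoidAlgebra.one_def]

lemma mulOp_mul (x y : Laur R n) : mulOp x * mulOp y = mulOp (x * y) :=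
  (LinearMap.mulLeft_mul R (Laur R n) x y).symm

lemma Laur.linearMap_ext {M : Type*} [AddCommMonoid M] [Module R M] {f g : Laur R n →ₗ[R] M}
    (h : ∀ v r, f (mono v r) = g (mono v r)) : f = g :=
  AddMonoidAlgebra.lhom_ext' fun v => LinearMap.ext fun r => h v r

lemma Laur.algHom_ext {B : Type*} [Semiring B] [Algebra R B] {f g : Laur R n →ₐ[R] B}
    (h : ∀ i, f (Xel i) = g (Xel i)) : f = g :=
  (AddMonoidAlgebra.lift R B (Fin n →₀ ℤ)).symm.injective
    (Finsupp.mulHom_ext' fun i => MonoidHom.ext_mint (h i))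

/-- The automorphism `X_i ↦ q^{l i} X_{w i}`. -/
def twist (q : Rˣ) (w : Equiv.Perm (Fin n)) (l : Fin n → ℤ) : Laur R n →ₐ[R] Laur R n :=
  AddMonoidAlgebra.lift R (Laur R n) (Fin n →₀ ℤ)
    { toFun v := mono (Finsupp.equivMapDomain w v.toAdd) ↑(q ^ ∑ i, l i * v.toAdd i)
      map_one' := by simp [← mono_zero_one]
      map_mul' u v := by
        have hadd : Finsupp.equivMapDomain w (u.toAdd + v.toAdd)
            = Finsupp.equivMapDomain w u.toAdd + Finsupp.equivMapDomain w v.toAdd :=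
          Finsupp.ext fun _ => rfl
        simp only [mono_mul_mono, toAdd_mul, hadd, Finsupp.add_apply, mul_add,
          Finset.sum_add_distrib, zpow_add, Units.val_mul] }

/-- The automorphism `X_i ↦ X_{w i}`. -/
abbrev permute (w : Equiv.Perm (Fin n)) : Laur R n →ₐ[R] Laur R n := twist 1 w 0

variable {q : Rˣ} {w w' : Equiv.Perm (Fin n)} {l l' : Fin n → ℤ}

lemma twist_mono (v : Fin n →₀ ℤ) (r : R) : twist q w l (mono v r)
    = (↑(q ^ ∑ i, l i * v i) : R) • mono (Finsupp.equivMapDomain w v) r := by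
  rw [twist, mono, AddMonoidAlgebra.lift_single, smul_mono, mul_comm]
  exact smul_mono ..

lemma twist_Xel (i : Fin n) : twist q w l (Xel i) = (↑(q ^ l i) : R) • Xel (w i) := by
  rw [Xel, twist_mono, Finsupp.equivMapDomain_single]
  simp [Finsupp.single_apply, Xel]

lemma permute_Xel (i : Fin n) : permute w (Xel i : Laur R n) = Xel (w i) := by
  simp [twist_Xel]

lemma twist_zero : twist q w 0 = permute w :=
  Laur.algHom_ext fun i => by simp [twist_Xel]

lemma twist_one_zero : twist q (1 : Equiv.Perm (Fin n)) 0 = AlgHom.id R _ :=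
  Laur.algHom_ext fun i => by simp [twist_Xel]

lemma twist_comp_twist :
    (twist q w l).comp (twist q w' l') = twist q (w * w') (l' + l ∘ w') :=
  Laur.algHom_ext fun i => by simp [twist_Xel, smul_smul, zpow_add]

lemma permute_permute (p : Laur R n) : permute w (permute w' p) = permute (w * w') p := by
  rw [← AlgHom.comp_apply, twist_comp_twist]; simp

/-- `twist q w l` as an invertible operator. -/
def twistUnit (q : Rˣ) (w : Equiv.Perm (Fin n)) (l : Fin n → ℤ) :
    (Module.End R (Laur R n))ˣ where
  val := (twist q w l).toLinearMap
  inv := (twist q w⁻¹ (-l ∘ ⇑w⁻¹)).toLinearMap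
  val_inv := by
    rw [Module.End.mul_eq_comp, ← AlgHom.comp_toLinearMap, twist_comp_twist]
    rw [mul_inv_cancel, show -l ∘ ⇑w⁻¹ + l ∘ ⇑w⁻¹ = 0 from neg_add_cancel _, twist_one_zero]
    rfl
  inv_val := by
    rw [Module.End.mul_eq_comp, ← AlgHom.comp_toLinearMap, twist_comp_twist]
    rw [inv_mul_cancel, show l + (-l ∘ ⇑w⁻¹) ∘ ⇑w = 0 by ext; simp, twist_one_zero]
    rfl

lemma twistUnit_mul_twistUnit :
    twistUnit q w l * twistUnit q w' l' = twistUnit q (w * w') (l' + l ∘ w') :=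
  Units.ext <| LinearMap.ext fun p =>
    DFunLike.congr_fun (twist_comp_twist (q := q) (w := w) (l := l)) p

lemma twistUnit_one_zpow (m : ℤ) :
    twistUnit q (1 : Equiv.Perm (Fin n)) l ^ m = twistUnit q 1 (m • l) := by
  have hadd (l l' : Fin n → ℤ) : twistUnit q (1 : Equiv.Perm (Fin n)) (l + l')
      = twistUnit q 1 l * twistUnit q 1 l' := by
    rw [twistUnit_mul_twistUnit, mul_one, add_comm, Equiv.Perm.coe_one, Function.comp_id]
  have h := map_zpow (MonoidHom.mk' (fun l => twistUnit q (1 : Equiv.Perm (Fin n)) l.toAdd)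
    fun l l' : Multiplicative (Fin n → ℤ) => hadd l.toAdd l'.toAdd) (.ofAdd l) m
  exact h.symm

lemma twistUnit_pow (k : ℕ) :
    twistUnit q w l ^ k = twistUnit q (w ^ k) (∑ j ∈ Finset.range k, l ∘ ⇑(w ^ j)) := by
  induction k with
  | zero => exact Units.ext (congrArg AlgHom.toLinearMap twist_one_zero).symm
  | succ k ih => rw [pow_succ', ih, twistUnit_mul_twistUnit, pow_succ', Finset.sum_range_succ]

lemma coe_twistUnit_apply (p : Laur R n) :
    (↑(twistUnit q w l) : Module.End R (Laur R n)) p = twist q w l p := rfl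

lemma twistUnit_mul_mulOp (p : Laur R n) :
    (↑(twistUnit q w l) : Module.End R (Laur R n)) * mulOp p
      = mulOp (twist q w l p) * ↑(twistUnit q w l) :=
  LinearMap.ext fun x => map_mul (twist q w l) p x

end Twist

section CyclicShift

variable {N : ℕ} {q : Rˣ}

/-- The operator `π⁻¹ : X_0 ↦ q X_N, X_{i+1} ↦ X_i`. -/
def cyclicShift (N : ℕ) (q : Rˣ) : (Module.End R (Laur R (N + 1)))ˣ :=
  twistUnit q (finRotate (N + 1)).symm (Pi.single 0 1)

lemma cyclicShift_mono (v : Fin (N + 1) →₀ ℤ) (r : R) :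
    (↑(cyclicShift N q) : Module.End R (Laur R (N + 1))) (mono v r)
      = (↑(q ^ v 0) : R) • mono (Finsupp.equivMapDomain (finRotate (N + 1)).symm v) r := by
  rw [cyclicShift, coe_twistUnit_apply, twist_mono]
  simp [Pi.single_apply]

open Fin.NatCast Fin.CommRing in
lemma cyclicShift_pow : cyclicShift N q ^ (N + 1) = twistUnit q 1 1 := by
  have hpow (j : ℕ) (i : Fin (N + 1)) :
      ((finRotate (N + 1)).symm ^ j) i = i - (j : Fin (N + 1)) := by
    induction j with
    | zero => simp
    | succ j ih =>
      rw [pow_succ', Equiv.Perm.mul_apply, ih, Equiv.symm_apply_eq, finRotate_apply]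
      push_cast
      ring
  rw [cyclicShift, twistUnit_pow]
  congr 1
  · ext i
    simp [hpow]
  · ext i
    rw [Finset.sum_range, Finset.sum_apply]
    simp [hpow, Pi.single_apply, sub_eq_zero]

end CyclicShift

section RationalDemazureLusztig

variable {K : Type*} [Field K]

/-- The Demazure–Lusztig operator `p ↦ ((t⁻¹ y - t x) s(p) + (t - t⁻¹) y p) / (y - x)` on a field,
for an endomorphism `s` thought of as exchanging `x` and `y`. -/
def demazureLusztig (s : K →+* K) (t x y p : K) : K :=
  ((t⁻¹ * y - t * x) * s p + (t - t⁻¹) * (y * p)) / (y - x)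

lemma demazureLusztig_braid {s₁ s₂ : K →+* K} {t x y z p : K}
    (ht : t ≠ 0) (hyx : y - x ≠ 0) (hzy : z - y ≠ 0) (hzx : z - x ≠ 0)
    (ht₁ : s₁ t = t) (hx₁ : s₁ x = y) (hy₁ : s₁ y = x) (hz₁ : s₁ z = z)
    (ht₂ : s₂ t = t) (hx₂ : s₂ x = x) (hy₂ : s₂ y = z) (hz₂ : s₂ z = y)
    (hs₁ : s₁ (s₁ p) = p) (hs₂ : s₂ (s₂ p) = p) (hs : s₁ (s₂ (s₁ p)) = s₂ (s₁ (s₂ p))) :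
    demazureLusztig s₁ t x y (demazureLusztig s₂ t y z (demazureLusztig s₁ t x y p))
      = demazureLusztig s₂ t y z (demazureLusztig s₁ t x y (demazureLusztig s₂ t y z p)) := by
  have hxy : x - y ≠ 0 := sub_ne_zero_of_ne (sub_ne_zero.1 hyx).symm
  have hyz : y - z ≠ 0 := sub_ne_zero_of_ne (sub_ne_zero.1 hzy).symm
  simp only [demazureLusztig, map_div₀, map_add, map_mul, map_sub, map_inv₀, ht₁, hx₁, hy₁, hz₁,
    ht₂, hx₂, hy₂, hz₂, hs₁, hs₂, hs]
  field_simp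
  ring

end RationalDemazureLusztig

section DemazureLusztig

variable {F : Type*} [Field F] {τ : F} {i j i' j' : Fin n} {t t' g : Module.End F (Laur F n)}

/-- `t` is the Demazure–Lusztig operator with parameter `τ` exchanging `X_i` and `X_j`. -/
def IsDemazureLusztig (τ : F) (i j : Fin n) (t : Module.End F (Laur F n)) : Prop :=
  ∀ p, (Xel j - Xel i) * t p = (τ⁻¹ • Xel j - τ • Xel i) * permute (Equiv.swap i j) p
    + (τ - τ⁻¹) • (Xel j * p)

lemma smul_Xel_sub_smul_Xel_ne_zero {a : F} (ha : a ≠ 0) (b : F) (hij : i ≠ j) :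
    (a • Xel j - b • Xel i : Laur F n) ≠ 0 := by
  intro h
  have hcoeff := congrArg (fun p : Laur F n => p.coeff (Finsupp.single j 1)) h
  simp [Xel, mono, Finsupp.single_left_inj, hij, ha] at hcoeff

lemma Xel_sub_Xel_ne_zero (hij : i ≠ j) : (Xel j - Xel i : Laur F n) ≠ 0 := by
  simpa using smul_Xel_sub_smul_Xel_ne_zero (F := F) one_ne_zero 1 hij

namespace IsDemazureLusztig

lemma semiconjBy {c : F} (hc : c ≠ 0) (hij' : i' ≠ j') (ht : IsDemazureLusztig τ i j t)
    (ht' : IsDemazureLusztig τ i' j' t') (hi : g * mulOp (Xel i) = c • (mulOp (Xel i') * g))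
    (hj : g * mulOp (Xel j) = c • (mulOp (Xel j') * g))
    (hs : SemiconjBy g (permute (Equiv.swap i j)).toLinearMap
      (permute (Equiv.swap i' j')).toLinearMap) :
    SemiconjBy g t t' := by
  have hgi (p) : g (Xel i * p) = c • (Xel i' * g p) := LinearMap.congr_fun hi p
  have hgj (p) : g (Xel j * p) = c • (Xel j' * g p) := LinearMap.congr_fun hj p
  have hgs (p) : g (permute (Equiv.swap i j) p) = permute (Equiv.swap i' j') (g p) :=
    LinearMap.congr_fun hs.eq p
  refine LinearMap.ext fun p => mul_left_cancel₀ (Xel_sub_Xel_ne_zero (F := F) hij') ?_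
  have h := congrArg g (ht p)
  simp only [sub_mul, smul_mul_assoc, map_sub, map_add, map_smul, hgi, hgj, hgs] at h
  refine smul_right_injective _ hc ?_
  simp only [Module.End.mul_apply, ht' (g p), sub_mul, smul_add, smul_sub, smul_mul_assoc] at h ⊢
  rw [h]
  module

lemma semiconjBy_twistUnit {q : Fˣ} {w : Equiv.Perm (Fin n)} {l : Fin n → ℤ}
    (hij : i ≠ j) (hl : l i = l j) (ht : IsDemazureLusztig τ i j t)
    (ht' : IsDemazureLusztig τ (w i) (w j) t') :
    SemiconjBy (↑(twistUnit q w l) : Module.End F (Laur F n)) t t' := by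
  have hX (k) : (↑(twistUnit q w l) : Module.End F (Laur F n)) * mulOp (Xel k)
      = (↑(q ^ l k) : F) •
        (mulOp (Xel (w k)) * (↑(twistUnit q w l) : Module.End F (Laur F n))) := by
    rw [twistUnit_mul_mulOp, twist_Xel]
    exact LinearMap.ext fun p => smul_mul_assoc ..
  refine semiconjBy (q ^ l i).ne_zero (w.injective.ne hij) ht ht' (hX i) (hl ▸ hX j) ?_
  have hls : l ∘ Equiv.swap i j = l := by
    ext k
    rcases eq_or_ne k i with rfl | hki
    · simp [hl]
    rcases eq_or_ne k j with rfl | hkj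
    · simp [hl]
    · simp [Equiv.swap_apply_of_ne_of_ne hki hkj]
  have hcomm : (twist q w l).comp (permute (Equiv.swap i j))
      = (permute (Equiv.swap (w i) (w j))).comp (twist q w l) := by
    rw [← twist_zero (q := q), ← twist_zero (q := q), twist_comp_twist, twist_comp_twist, hls,
      Equiv.mul_swap_eq_swap_mul]
    simp
  exact congrArg AlgHom.toLinearMap hcomm

lemma mul_mulOp_Xel (hij : i ≠ j) (ht : IsDemazureLusztig τ i j t) :
    t * mulOp (Xel i) = mulOp (Xel j) * (t + (τ⁻¹ - τ) • 1) := by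
  refine LinearMap.ext fun p => mul_left_cancel₀ (Xel_sub_Xel_ne_zero (F := F) hij) ?_
  have hp : (Xel j - Xel i) * (Xel j * t p) = Xel j * ((Xel j - Xel i) * t p) := by ring
  change (Xel j - Xel i) * t (Xel i * p)
    = (Xel j - Xel i) * (Xel j * (t p + (τ⁻¹ - τ) • p))
  rw [ht, mul_add, mul_add, hp, ht, map_mul, permute_Xel, Equiv.swap_apply_left]
  simp only [Algebra.smul_def, map_sub]
  ring

lemma commute_mulOp (hij : i ≠ j) (ht : IsDemazureLusztig τ i j t) {u : Laur F n}
    (hu : permute (Equiv.swap i j) u = u) :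
    Commute t (mulOp u) := by
  refine LinearMap.ext fun p => mul_left_cancel₀ (Xel_sub_Xel_ne_zero (F := F) hij) ?_
  have hp : (Xel j - Xel i) * (u * t p) = u * ((Xel j - Xel i) * t p) := by ring
  change (Xel j - Xel i) * t (u * p) = (Xel j - Xel i) * (u * t p)
  rw [ht, hp, ht, map_mul, hu]
  simp only [Algebra.smul_def]
  ring

lemma commute_mulOp_Xel (hij : i ≠ j) (ht : IsDemazureLusztig τ i j t) {k : Fin n}
    (hki : k ≠ i) (hkj : k ≠ j) :
    Commute t (mulOp (Xel k)) :=
  ht.commute_mulOp hij (by rw [permute_Xel, Equiv.swap_apply_of_ne_of_ne hki hkj])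

lemma commute_of_disjoint (hij : i ≠ j) (ht : IsDemazureLusztig τ i j t) {k l : Fin n}
    (hkl : k ≠ l) (ht' : IsDemazureLusztig τ k l t')
    (hki : k ≠ i) (hkj : k ≠ j) (hli : l ≠ i) (hlj : l ≠ j) : Commute t t' := by
  have hs : SemiconjBy (permute (Equiv.swap k l)).toLinearMap t t :=
    semiconjBy_twistUnit (q := 1) (l := 0) hij rfl ht (by
      rwa [Equiv.swap_apply_of_ne_of_ne hki.symm hli.symm,
        Equiv.swap_apply_of_ne_of_ne hkj.symm hlj.symm])
  refine semiconjBy one_ne_zero hkl ht' ht' ?_ ?_ hs.symm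
  · rw [one_smul]; exact ht.commute_mulOp_Xel hij hki hkj
  · rw [one_smul]; exact ht.commute_mulOp_Xel hij hli hlj

end IsDemazureLusztig

end DemazureLusztig

section RationalFunctions

variable {F : Type*} [Field F]

/-- The field `F(X_1, …, X_n)` of rational functions. -/
abbrev RatLaur (F : Type*) [Field F] (n : ℕ) : Type _ := FractionRing (Laur F n)

/-- The inclusion of Laurent polynomials into rational functions. -/
def toRat : Laur F n →ₐ[F] RatLaur F n := IsScalarTower.toAlgHom F (Laur F n) (RatLaur F n)

lemma toRat_injective : Function.Injective (toRat : Laur F n →ₐ[F] RatLaur F n) :=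
  IsFractionRing.injective (Laur F n) (RatLaur F n)

variable {q : Fˣ} {w w' : Equiv.Perm (Fin n)} {l l' : Fin n → ℤ}

lemma twist_injective : Function.Injective (twist q w l) := fun x y h => by
  have hinv := (twistUnit q w l).inv_mul
  exact (LinearMap.congr_fun hinv x).symm.trans
    ((congrArg (↑(twistUnit q w l)⁻¹ : Module.End F (Laur F n)) h).trans
      (LinearMap.congr_fun hinv y))

/-- The extension of `twist q w l` to rational functions. -/
def twistRat (q : Fˣ) (w : Equiv.Perm (Fin n)) (l : Fin n → ℤ) :
    RatLaur F n →ₐ[F] RatLaur F n :=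
  IsFractionRing.liftAlgHom (R := F) (A := Laur F n) (K := RatLaur F n) (L := RatLaur F n)
    (g := toRat.comp (twist q w l)) (toRat_injective.comp twist_injective)

lemma twistRat_toRat (p : Laur F n) : twistRat q w l (toRat p) = toRat (twist q w l p) :=
  IsFractionRing.lift_algebraMap (toRat_injective.comp twist_injective) p

namespace IsDemazureLusztig

variable {τ : F} {i j k : Fin n} {t t' : Module.End F (Laur F n)}

lemma toRat_apply (hij : i ≠ j) (ht : IsDemazureLusztig τ i j t) (p : Laur F n) :
    toRat (t p) = demazureLusztig (twistRat (F := F) 1 (Equiv.swap i j) 0).toRingHom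
      (algebraMap F _ τ) (toRat (Xel i)) (toRat (Xel j)) (toRat p) := by
  have hne : toRat (Xel j - Xel i : Laur F n) ≠ 0 :=
    (map_ne_zero_iff _ toRat_injective).2 (Xel_sub_Xel_ne_zero hij)
  rw [demazureLusztig, ← map_sub, eq_div_iff hne, mul_comm, ← map_mul, ht p]
  rw [AlgHom.toRingHom_eq_coe, RingHom.coe_coe, twistRat_toRat]
  simp only [map_add, map_sub, map_mul, Algebra.smul_def, AlgHom.commutes, map_inv₀]

lemma braid (hij : i ≠ j) (hjk : j ≠ k) (hik : i ≠ k) (hτ : τ ≠ 0)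
    (ht : IsDemazureLusztig τ i j t) (ht' : IsDemazureLusztig τ j k t') :
    t * t' * t = t' * t * t' := by
  have hne {a b : Fin n} (h : a ≠ b) : toRat (Xel b : Laur F n) - toRat (Xel a) ≠ 0 := by
    rw [← map_sub]
    exact (map_ne_zero_iff _ toRat_injective).2 (Xel_sub_Xel_ne_zero h)
  have hbraid : Equiv.swap i j * (Equiv.swap j k * Equiv.swap i j)
      = Equiv.swap j k * (Equiv.swap i j * Equiv.swap j k) := by
    rw [← mul_assoc, ← mul_assoc, Equiv.swap_mul_swap_mul_swap hij hik, Equiv.swap_comm i j,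
      Equiv.swap_comm j k, Equiv.swap_mul_swap_mul_swap hjk.symm hik.symm, Equiv.swap_comm]
  refine LinearMap.ext fun p => toRat_injective ?_
  simp only [Module.End.mul_apply, ht.toRat_apply hij, ht'.toRat_apply hjk]
  refine demazureLusztig_braid ((map_ne_zero _).2 hτ) (hne hij) (hne hjk) (hne hik)
    ?_ ?_ ?_ ?_ ?_ ?_ ?_ ?_ ?_ ?_ ?_ <;>
  simp [twistRat_toRat, twist_one_zero, permute_Xel, permute_permute, hbraid,
    Equiv.swap_apply_of_ne_of_ne, hij, hik, hik.symm, hjk.symm]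

end IsDemazureLusztig

end RationalFunctions

section PolynomialRepresentation

/-- Multiplication by `X_i`, as an invertible operator. -/
def unitX (i : ℕ) : (Module.End R (Laur R n))ˣ where
  val := XOp i
  inv := XinvOp i
  val_inv := by
    by_cases hi : i < n
    · simp only [XOp, XinvOp, hi, dif_pos, mulOp_mul, Xel, XinvEl, mono_mul_mono]
      simp [mono_zero_one, mulOp, Module.End.one_eq_id]
    · simp [XOp, XinvOp, hi]
  inv_val := by
    by_cases hi : i < n
    · simp only [XOp, XinvOp, hi, dif_pos, mulOp_mul, Xel, XinvEl, mono_mul_mono]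
      simp [mono_zero_one, mulOp, Module.End.one_eq_id]
    · simp [XOp, XinvOp, hi]

lemma coe_unitX {i : ℕ} (hi : i < n) :
    ((unitX i : (Module.End R (Laur R n))ˣ) : Module.End R (Laur R n)) = mulOp (Xel ⟨i, hi⟩) :=
  dif_pos hi

variable {F : Type*} [Field F] {N : ℕ} {q : Fˣ} {τ : F}

lemma finRotate_symm_succ {j : ℕ} (hj : j < N) :
    (finRotate (N + 1)).symm ⟨j + 1, by omega⟩ = ⟨j, by omega⟩ := by
  rw [Equiv.symm_apply_eq, finRotate_of_lt hj]

lemma finRotate_symm_zero : (finRotate (N + 1)).symm 0 = Fin.last N := by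
  rw [Equiv.symm_apply_eq, finRotate_last]

lemma cyclicShift_mul_mulOp_Xel (i : Fin (N + 1)) :
    (↑(cyclicShift N q) : Module.End F (Laur F (N + 1))) * mulOp (Xel i)
      = (↑(q ^ (Pi.single 0 1 : Fin (N + 1) → ℤ) i) : F) •
        (mulOp (Xel ((finRotate (N + 1)).symm i)) *
          (↑(cyclicShift N q) : Module.End F (Laur F (N + 1)))) := by
  rw [cyclicShift, twistUnit_mul_mulOp, twist_Xel]
  exact LinearMap.ext fun p => smul_mul_assoc ..

lemma semiconjBy_cyclicShift_sq {T : ℕ → (Module.End F (Laur F (N + 1)))ˣ}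
    (hT : ∀ k (hk : k < N),
      IsDemazureLusztig (n := N + 1) τ ⟨k, by omega⟩ ⟨k + 1, by omega⟩ (T k)) (hN : 0 < N) :
    SemiconjBy (↑(cyclicShift N q ^ 2) : Module.End F (Laur F (N + 1))) (T 0) (T (N - 1)) := by
  obtain ⟨M, rfl⟩ := Nat.exists_eq_succ_of_ne_zero hN.ne'
  have h0 : (finRotate (M + 2)).symm 0 = Fin.last (M + 1) := finRotate_symm_zero
  have h1 : (finRotate (M + 2)).symm 1 = 0 := finRotate_symm_succ M.succ_pos
  have hlast : (finRotate (M + 2)).symm (Fin.last (M + 1)) = ⟨M, by omega⟩ :=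
    finRotate_symm_succ M.lt_succ_self
  rw [pow_two, cyclicShift, twistUnit_mul_twistUnit]
  refine (hT 0 hN).semiconjBy_twistUnit (by simp) ?_ ?_
  · change (Pi.single 0 1 + Pi.single 0 1 ∘ ⇑(finRotate (M + 2)).symm : Fin (M + 2) → ℤ) 0
      = (Pi.single 0 1 + Pi.single 0 1 ∘ ⇑(finRotate (M + 2)).symm : Fin (M + 2) → ℤ) 1
    simp [h0, h1]
  · change IsDemazureLusztig τ ((finRotate (M + 2)).symm ((finRotate (M + 2)).symm 0))
      ((finRotate (M + 2)).symm ((finRotate (M + 2)).symm 1)) _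
    rw [h1, h0, hlast]
    exact hT M M.lt_succ_self

/-- The polynomial representation of the double affine Hecke algebra. -/
def polynomialRep (q : Fˣ) (hτ : τ ≠ 0) (T : ℕ → (Module.End F (Laur F (N + 1)))ˣ)
    (hT : ∀ k (hk : k < N),
      IsDemazureLusztig (n := N + 1) τ ⟨k, by omega⟩ ⟨k + 1, by omega⟩ (T k))
    (hTinv : ∀ k < N, (↑(T k)⁻¹ : Module.End F (Laur F (N + 1))) = T k + (τ⁻¹ - τ) • 1) :
    DAHARep F (Module.End F (Laur F (N + 1))) N (q : F) (τ⁻¹ - τ) where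
  T := T
  X := unitX
  P := cyclicShift N q
  q_ne_zero := q.ne_zero
  inv_T := fun hk => hTinv _ hk
  braid :=
    { commute := fun {i j} hij hj => Commute.units_of_val <|
        (hT i (by omega)).commute_of_disjoint (by simp) (by simp) (hT j hj) (by simp; omega)
          (by simp; omega) (by simp; omega) (by simp; omega)
      braid := fun {i} hi => Units.ext <|
        (hT i (by omega)).braid (by simp) (by simp) (by simp; omega) hτ (hT (i + 1) hi) }
  T_mul_X_mul_T := fun {k} hk => by
    rw [← eq_mul_inv_iff_mul_eq]
    refine Units.ext ?_
    rw [Units.val_mul, Units.val_mul, hTinv k hk, coe_unitX (by omega), coe_unitX (by omega)]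
    exact (hT k hk).mul_mulOp_Xel (by simp)
  commute_T_X := fun {k j} hk hj hjk hjk' => Commute.units_of_val <| by
    rw [coe_unitX (by omega)]
    exact (hT k hk).commute_mulOp_Xel (by simp) (by simpa using hjk) (by simpa using hjk')
  commute_X := fun {i j} hi hj => Commute.units_of_val <| by
    rw [coe_unitX (by omega), coe_unitX (by omega), Commute, SemiconjBy, mulOp_mul, mulOp_mul,
      mul_comm]
  P_X_succ := fun {j} hj => Units.ext <| by
    rw [Units.val_mul, Units.val_mul, coe_unitX (by omega), coe_unitX (by omega),
      cyclicShift_mul_mulOp_Xel, finRotate_symm_succ hj]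
    simp
  P_mul_X_zero := by
    rw [coe_unitX N.succ_pos, coe_unitX N.lt_succ_self]
    have h := cyclicShift_mul_mulOp_Xel (N := N) (q := q) 0
    rwa [finRotate_symm_zero, Pi.single_eq_same, zpow_one] at h
  P_T_succ := fun {k} hk => SemiconjBy.units_of_val <|
    (hT (k + 1) hk).semiconjBy_twistUnit (by simp) (by simp) (by
      rw [finRotate_symm_succ (by omega : k < N), finRotate_symm_succ hk]
      exact hT k (by omega))
  P_sq_T_zero := fun hN => SemiconjBy.units_of_val (semiconjBy_cyclicShift_sq hT hN)

end PolynomialRepresentation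

section SpanOfAlgHoms

variable {F A K : Type*} [CommRing F] [Ring A] [Algebra F A] [Field K] [Algebra F K]

lemma mem_span_algHom_of_map_mul {S : Set (A →ₐ[F] K)} {φ : A →ₗ[F] K}
    (hφ : φ ∈ Submodule.span K (AlgHom.toLinearMap '' S)) {U : Set A} {ψ : A → K}
    (hU : ∀ u ∈ U, ∀ p, φ (u * p) = ψ u * φ p) :
    φ ∈ Submodule.span K (AlgHom.toLinearMap '' {χ ∈ S | ∀ u ∈ U, χ u = ψ u}) := by
  rw [Finsupp.mem_span_image_iff_linearCombination] at hφ ⊢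
  obtain ⟨a, haS, rfl⟩ := hφ
  refine ⟨a, fun χ hχ => ⟨haS hχ, fun u hu => ?_⟩, rfl⟩
  have hrel : ∑ χ ∈ a.support, (a χ * (χ u - ψ u)) • χ.toLinearMap = 0 := by
    refine LinearMap.ext fun p => ?_
    have h := hU u hu p
    rw [Finsupp.linearCombination_apply, Finsupp.sum, LinearMap.sum_apply, LinearMap.sum_apply,
      Finset.mul_sum, ← sub_eq_zero, ← Finset.sum_sub_distrib] at h
    rw [LinearMap.sum_apply, LinearMap.zero_apply, ← h]
    refine Finset.sum_congr rfl fun χ _ => ?_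
    simp only [LinearMap.smul_apply, AlgHom.toLinearMap_apply, map_mul, smul_eq_mul]
    ring
  have hzero := linearIndependent_iff'.1 (linearIndependent_toLinearMap F A K) _ _ hrel χ hχ
  exact sub_eq_zero.1 ((mul_eq_zero.1 hzero).resolve_left (Finsupp.mem_support_iff.1 hχ))

end SpanOfAlgHoms

section TwistSpan

variable {F : Type*} [Field F] {q : Fˣ} {w : Equiv.Perm (Fin n)} {l : Fin n → ℤ}

/-- The operators `∑ a • twist q w l` with rational functions as coefficients `a`. -/
def twistSpan (q : Fˣ) (n : ℕ) : Submodule (RatLaur F n) (Laur F n →ₗ[F] RatLaur F n) :=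
  Submodule.span _ (AlgHom.toLinearMap ''
    Set.range fun g : Equiv.Perm (Fin n) × (Fin n → ℤ) => toRat.comp (twist q g.1 g.2))

lemma twistRat_comp_mem_twistSpan {φ : Laur F n →ₗ[F] RatLaur F n} (hφ : φ ∈ twistSpan q n) :
    (twistRat q w l).toLinearMap ∘ₗ φ ∈ twistSpan q n := by
  induction hφ using Submodule.span_induction with
  | mem φ hφ =>
    obtain ⟨_, ⟨⟨w', l'⟩, rfl⟩, rfl⟩ := hφ
    refine Submodule.subset_span ⟨_, ⟨(w * w', l' + l ∘ w'), rfl⟩, LinearMap.ext fun p => ?_⟩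
    change toRat (twist q (w * w') (l' + l ∘ w') p) = twistRat q w l (toRat (twist q w' l' p))
    rw [← twist_comp_twist, twistRat_toRat, AlgHom.comp_apply]
  | zero => rw [LinearMap.comp_zero]; exact zero_mem _
  | add φ φ' _ _ hφ hφ' => rw [LinearMap.comp_add]; exact add_mem hφ hφ'
  | smul a φ _ hφ =>
    have h : (twistRat q w l).toLinearMap ∘ₗ (a • φ)
        = twistRat q w l a • ((twistRat q w l).toLinearMap ∘ₗ φ) :=
      LinearMap.ext fun p => map_mul (twistRat q w l) a (φ p)
    rw [h]
    exact Submodule.smul_mem _ _ hφ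

lemma mulOp_comp_mem_twistSpan (p : Laur F n) {f : Module.End F (Laur F n)}
    (hf : toRat.toLinearMap ∘ₗ f ∈ twistSpan q n) :
    toRat.toLinearMap ∘ₗ (mulOp p * f) ∈ twistSpan q n := by
  have h : toRat.toLinearMap ∘ₗ (mulOp p * f) = toRat p • (toRat.toLinearMap ∘ₗ f) :=
    LinearMap.ext fun x => map_mul toRat p (f x)
  rw [h]
  exact Submodule.smul_mem _ _ hf

lemma twistUnit_comp_mem_twistSpan {f : Module.End F (Laur F n)}
    (hf : toRat.toLinearMap ∘ₗ f ∈ twistSpan q n) :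
    toRat.toLinearMap ∘ₗ ((↑(twistUnit q w l) : Module.End F (Laur F n)) * f)
      ∈ twistSpan q n := by
  have h : toRat.toLinearMap ∘ₗ ((↑(twistUnit q w l) : Module.End F (Laur F n)) * f)
      = (twistRat q w l).toLinearMap ∘ₗ toRat.toLinearMap ∘ₗ f :=
    LinearMap.ext fun x => (twistRat_toRat (f x)).symm
  rw [h]
  exact twistRat_comp_mem_twistSpan hf

lemma IsDemazureLusztig.comp_mem_twistSpan {τ : F} {i j : Fin n} {t : Module.End F (Laur F n)}
    (hij : i ≠ j) (ht : IsDemazureLusztig τ i j t) {f : Module.End F (Laur F n)}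
    (hf : toRat.toLinearMap ∘ₗ f ∈ twistSpan q n) :
    toRat.toLinearMap ∘ₗ (t * f) ∈ twistSpan q n := by
  have hs : twistRat (F := F) 1 (Equiv.swap i j) 0 = twistRat q (Equiv.swap i j) 0 := by
    simp only [twistRat, twist_zero]
  set x : RatLaur F n := toRat (Xel i)
  set y : RatLaur F n := toRat (Xel j)
  set c : RatLaur F n := algebraMap F _ τ
  have h : toRat.toLinearMap ∘ₗ (t * f)
      = ((c⁻¹ * y - c * x) / (y - x)) •
          ((twistRat q (Equiv.swap i j) 0).toLinearMap ∘ₗ toRat.toLinearMap ∘ₗ f)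
        + ((c - c⁻¹) * y / (y - x)) • (toRat.toLinearMap ∘ₗ f) := by
    refine LinearMap.ext fun p => (ht.toRat_apply hij (f p)).trans ?_
    rw [← hs, demazureLusztig, add_div, mul_div_right_comm, ← mul_assoc, mul_div_right_comm]
    rfl
  rw [h]
  exact add_mem (Submodule.smul_mem _ _ (twistRat_comp_mem_twistSpan hf))
    (Submodule.smul_mem _ _ hf)

lemma eq_of_twist_ratio_eq (hq : Function.Injective fun m : ℤ => (q : F) ^ m)
    (h : ∀ i k, twist q w l (mono (Finsupp.single i 1 - Finsupp.single k 1) 1)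
      = mono (Finsupp.single i 1 - Finsupp.single k 1) 1) :
    w = 1 ∧ ∀ i k, l i = l k := by
  have hratio {i k : Fin n} (hik : i ≠ k) : w i = i ∧ l i = l k := by
    have h := h i k
    rw [twist_mono, smul_mono, mono, mono] at h
    have hcoeff := congrArg AddMonoidAlgebra.coeff h
    rw [AddMonoidAlgebra.coeff_single, AddMonoidAlgebra.coeff_single,
      Finsupp.single_eq_single_iff] at hcoeff
    obtain ⟨hexp, hpow⟩ := hcoeff.resolve_right fun h => one_ne_zero h.2
    have hwi := DFunLike.congr_fun hexp (w i)
    simp only [Finsupp.equivMapDomain_apply, Equiv.symm_apply_apply, Finsupp.coe_sub,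
      Pi.sub_apply, Finsupp.single_apply, mul_sub, mul_ite, mul_one, mul_zero,
      Finset.sum_sub_distrib, Finset.sum_ite_eq, Finset.mem_univ, if_true, if_neg hik.symm,
      Units.val_zpow_eq_zpow_val] at hwi hpow
    refine ⟨?_, sub_eq_zero.1 (hq (hpow.trans (zpow_zero _).symm))⟩
    split_ifs at hwi with h <;> first | exact h.symm | omega
  refine ⟨Equiv.ext fun i => ?_, fun i k => ?_⟩
  · by_contra hne
    exact hne (hratio (Ne.symm hne)).1
  · rcases eq_or_ne i k with rfl | hik
    · rfl
    · exact (hratio hik).2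

lemma mem_span_twist_one_of_map_ratio_mul (hq : Function.Injective fun m : ℤ => (q : F) ^ m)
    {f : Module.End F (Laur F n)} (hf : toRat.toLinearMap ∘ₗ f ∈ twistSpan q n)
    (hratio : ∀ i k p, f (mono (Finsupp.single i 1 - Finsupp.single k 1) 1 * p)
      = mono (Finsupp.single i 1 - Finsupp.single k 1) 1 * f p) :
    toRat.toLinearMap ∘ₗ f ∈ Submodule.span (RatLaur F n)
      (Set.range fun m : ℤ => (toRat.comp (twist q 1 fun _ : Fin n => m)).toLinearMap) := by
  have h := mem_span_algHom_of_map_mul (ψ := toRat) hf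
    (U := Set.range fun g : Fin n × Fin n => mono (Finsupp.single g.1 1 - Finsupp.single g.2 1) 1)
    (by
      rintro _ ⟨⟨i, k⟩, rfl⟩ p
      exact (congrArg toRat (hratio i k p)).trans (map_mul ..))
  refine Submodule.span_mono ?_ h
  rintro _ ⟨_, ⟨⟨⟨w, l⟩, rfl⟩, hfix⟩, rfl⟩
  obtain ⟨rfl, hl⟩ := eq_of_twist_ratio_eq hq fun i k =>
    toRat_injective (hfix _ ⟨(i, k), rfl⟩)
  obtain ⟨m, rfl⟩ : ∃ m : ℤ, l = fun _ => m := by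
    rcases isEmpty_or_nonempty (Fin n) with hn | ⟨⟨i⟩⟩
    · exact ⟨0, Subsingleton.elim _ _⟩
    · exact ⟨l i, funext fun k => hl k i⟩
  exact ⟨m, rfl⟩

lemma twist_one_mono (v : Fin n →₀ ℤ) (r : F) :
    twist q 1 l (mono v r) = (↑(q ^ ∑ i, l i * v i) : F) • mono v r := by
  rw [twist_mono, Equiv.Perm.one_def, Finsupp.equivMapDomain_refl]

lemma coeff_twist_one (p : Laur F n) (u : Fin n →₀ ℤ) :
    (twist q 1 l p).coeff u = ↑(q ^ ∑ i, l i * u i) * p.coeff u := by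
  induction p using AddMonoidAlgebra.induction_linear with
  | zero => simp
  | add p p' hp hp' => simp [mul_add, hp, hp']
  | single v r =>
    rw [← mono, twist_one_mono, smul_mono, mono, mono, AddMonoidAlgebra.coeff_single,
      AddMonoidAlgebra.coeff_single]
    rcases eq_or_ne v u with rfl | huv
    · simp
    · simp [huv]

lemma exists_map_mono_eq_mono (hq : Function.Injective fun m : ℤ => (q : F) ^ m)
    {f : Module.End F (Laur F n)}
    (hf : ∀ i, Commute f ↑(twistUnit q (1 : Equiv.Perm (Fin n)) (Pi.single i 1)))
    (v : Fin n →₀ ℤ) : ∃ c, f (mono v 1) = mono v c := by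
  set p := f (mono v 1)
  have hcoeff (u : Fin n →₀ ℤ) (hu : p.coeff u ≠ 0) : u = v := by
    ext i
    have htwist : twist q 1 (Pi.single i 1) p = (↑(q ^ v i) : F) • p := by
      have h : f (twist q 1 (Pi.single i 1) (mono v 1)) = twist q 1 (Pi.single i 1) p :=
        LinearMap.congr_fun (hf i).eq (mono v 1)
      rw [← h, twist_one_mono, map_smul]
      simp [Pi.single_apply, p]
    have h := congrArg (fun p : Laur F n => p.coeff u) htwist
    simp only [coeff_twist_one, AddMonoidAlgebra.coeff_smul, Finsupp.smul_apply,
      smul_eq_mul] at h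
    have hpow := mul_right_cancel₀ hu h
    refine hq ?_
    simpa [Pi.single_apply] using hpow
  refine ⟨p.coeff v, AddMonoidAlgebra.coeff_injective (Finsupp.ext fun u => ?_)⟩
  rw [mono, AddMonoidAlgebra.coeff_single]
  rcases eq_or_ne v u with rfl | huv
  · rw [Finsupp.single_eq_same]
  · rw [Finsupp.single_eq_of_ne huv.symm]
    exact not_not.1 fun hu => huv (hcoeff u hu).symm

lemma mem_span_twist_one {f : Module.End F (Laur F n)}
    (hf : toRat.toLinearMap ∘ₗ f ∈ Submodule.span (RatLaur F n)
      (Set.range fun m : ℤ => (toRat.comp (twist q 1 fun _ : Fin n => m)).toLinearMap))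
    (hmono : ∀ v, ∃ c, f (mono v 1) = mono v c) :
    f ∈ Submodule.span F (Set.range fun m : ℤ => (twist q 1 fun _ : Fin n => m).toLinearMap) := by
  obtain ⟨a, ha⟩ := Finsupp.mem_span_range_iff_exists_finsupp.1 hf
  obtain ⟨r, hr⟩ := LinearMap.exists_leftInverse_of_injective
    (Algebra.linearMap F (RatLaur F n)) (LinearMap.ker_eq_bot.2 (algebraMap F _).injective)
  choose c hc using hmono
  have hscalar (v : Fin n →₀ ℤ) : algebraMap F (RatLaur F n) (c v)
      = a.sum fun m b => (↑(q ^ ∑ i, m * v i) : F) • b := by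
    have h := LinearMap.congr_fun ha (mono v 1)
    have hne : toRat (mono v 1 : Laur F n) ≠ 0 :=
      (map_ne_zero_iff _ toRat_injective).2 fun h => by simp [mono] at h
    rw [Finsupp.sum, LinearMap.sum_apply, LinearMap.comp_apply, hc, ← mul_one (c v), ← smul_mono,
      map_smul, Algebra.smul_def] at h
    refine mul_right_cancel₀ hne (h.symm.trans ?_)
    rw [Finsupp.sum, Finset.sum_mul]
    refine Finset.sum_congr rfl fun m _ => ?_
    rw [LinearMap.smul_apply, AlgHom.toLinearMap_apply, AlgHom.comp_apply, twist_one_mono, map_smul,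
      smul_eq_mul, mul_smul_comm, smul_mul_assoc]
  have hc' (v : Fin n →₀ ℤ) : c v = a.sum fun m b => ↑(q ^ ∑ i, m * v i) * r b := by
    have h := congrArg r (hscalar v)
    rw [map_finsuppSum] at h
    simpa using (LinearMap.congr_fun hr (c v)).symm.trans h
  have hf' : f = ∑ m ∈ a.support, r (a m) • (twist q 1 fun _ => m).toLinearMap := by
    refine Laur.linearMap_ext fun v s => ?_
    have hs : mono v s = s • (mono v 1 : Laur F n) := by rw [smul_mono, mul_one]
    rw [hs, map_smul, map_smul, hc, ← mul_one (c v), ← smul_mono, hc', Finsupp.sum,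
      LinearMap.sum_apply, Finset.sum_smul]
    congr 1
    refine Finset.sum_congr rfl fun m _ => ?_
    rw [LinearMap.smul_apply, AlgHom.toLinearMap_apply, twist_one_mono, smul_smul, mul_comm]
  rw [hf']
  exact Submodule.sum_mem _ fun m _ => Submodule.smul_mem _ _ (Submodule.subset_span ⟨m, rfl⟩)

end TwistSpan

section DoubleCentralizerPolynomial

variable {F : Type*} [Field F]

lemma IsDemazureLusztig.commute_permute {τ : F} {i j : Fin n} {t f : Module.End F (Laur F n)}
    (hτ : τ ≠ 0) (hij : i ≠ j) (ht : IsDemazureLusztig τ i j t) (hft : Commute f t)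
    (hratio : ∀ p, f (mono (Finsupp.single j 1 - Finsupp.single i 1) 1 * p)
      = mono (Finsupp.single j 1 - Finsupp.single i 1) 1 * f p) :
    Commute f (permute (Equiv.swap i j)).toLinearMap := by
  set z : Laur F n := mono (Finsupp.single j 1 - Finsupp.single i 1) 1
  have hz : z * Xel i = Xel j := by simp [z, Xel, mono_mul_mono]
  have hXi : (Xel i : Laur F n) ≠ 0 := fun h => by simp [Xel, mono] at h
  have hz₀ : (τ⁻¹ • z - τ • 1 : Laur F n) ≠ 0 := fun h =>
    smul_Xel_sub_smul_Xel_ne_zero (inv_ne_zero hτ) τ hij (by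
      rw [← hz, ← smul_mul_assoc, ← one_mul (Xel i), ← mul_assoc, ← smul_mul_assoc, mul_one,
        ← sub_mul, h, zero_mul])
  have htz (p : Laur F n) : (τ⁻¹ • z - τ • 1) * permute (Equiv.swap i j) p
      = z * t p - t p - (τ - τ⁻¹) • (z * p) := by
    refine mul_left_cancel₀ hXi ?_
    have h := ht p
    rw [← hz] at h
    simp only [Algebra.smul_def] at h ⊢
    linear_combination -h
  refine LinearMap.ext fun p => mul_left_cancel₀ hz₀ ?_
  have hft' (p) : f (t p) = t (f p) := LinearMap.congr_fun hft.eq p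
  have hfz (p : Laur F n) : f ((τ⁻¹ • z - τ • 1) * p) = (τ⁻¹ • z - τ • 1) * f p := by
    simp only [sub_mul, smul_mul_assoc, one_mul, map_sub, map_smul, hratio]
  have h := congrArg f (htz p)
  rw [hfz, map_sub, map_sub, map_smul, hratio, hratio, hft', ← htz] at h
  exact h

variable {N : ℕ} {q : Fˣ} {τ : F} {f : Module.End F (Laur F (N + 1))}

lemma commute_twistUnit_single (hP : Commute f ↑(cyclicShift N q))
    (hs : ∀ k (hk : k < N), Commute f
      (permute (Equiv.swap (⟨k, by omega⟩ : Fin (N + 1)) ⟨k + 1, by omega⟩)).toLinearMap)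
    (i : Fin (N + 1)) :
    Commute f ↑(twistUnit q (1 : Equiv.Perm (Fin (N + 1))) (Pi.single i 1)) := by
  have hw (w : Equiv.Perm (Fin (N + 1))) : Commute f ↑(twistUnit q w 0) := by
    have hmem : w ∈ Submonoid.closure (Set.range fun i : Fin N => Equiv.swap i.castSucc i.succ) :=
      Equiv.Perm.mclosure_swap_castSucc_succ N ▸ Submonoid.mem_top w
    induction hmem using Submonoid.closure_induction with
    | mem w hw =>
      obtain ⟨k, rfl⟩ := hw
      change Commute f (twist q _ 0).toLinearMap
      rw [twist_zero]
      exact hs k k.2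
    | one =>
      change Commute f (twist q 1 0).toLinearMap
      rw [twist_one_zero]
      exact Commute.one_right f
    | mul w w' _ _ hw hw' =>
      have h : twistUnit q (w * w') 0 = twistUnit (R := F) q w 0 * twistUnit q w' 0 := by
        rw [twistUnit_mul_twistUnit, Pi.zero_comp, add_zero]
      rw [h, Units.val_mul]
      exact hw.mul_right hw'
  set σ := (finRotate (N + 1)).symm
  have hl : (Pi.single 0 1 : Fin (N + 1) → ℤ) ∘ Equiv.swap 0 i = Pi.single i 1 := by
    ext k
    simp [Pi.single_apply, Equiv.swap_apply_eq_iff]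
  have h : twistUnit q (1 : Equiv.Perm (Fin (N + 1))) (Pi.single i 1)
      = twistUnit (R := F) q (σ * Equiv.swap 0 i)⁻¹ 0 *
        (cyclicShift N q * twistUnit q (Equiv.swap 0 i) 0) := by
    rw [cyclicShift, twistUnit_mul_twistUnit, twistUnit_mul_twistUnit, inv_mul_cancel,
      Pi.zero_comp, zero_add, add_zero, hl]
  rw [h, Units.val_mul, Units.val_mul]
  exact (hw _).mul_right (hP.mul_right (hw _))

variable (q) (hτ : τ ≠ 0) (T : ℕ → (Module.End F (Laur F (N + 1)))ˣ)
  (hT : ∀ k (hk : k < N),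
    IsDemazureLusztig (n := N + 1) τ ⟨k, by omega⟩ ⟨k + 1, by omega⟩ (T k))
  (hTinv : ∀ k < N, (↑(T k)⁻¹ : Module.End F (Laur F (N + 1))) = T k + (τ⁻¹ - τ) • 1)

lemma comp_mem_twistSpan_of_mem_daha (hf : f ∈ (polynomialRep q hτ T hT hTinv).daha) :
    toRat.toLinearMap ∘ₗ f ∈ twistSpan q (N + 1) := by
  refine adjoin_le_of_mul_mem (W := ((twistSpan q (N + 1)).restrictScalars F).comap
    (LinearMap.compRight F toRat.toLinearMap)) ?_ ?_ hf
  · refine Submodule.subset_span ⟨_, ⟨(1, 0), rfl⟩, ?_⟩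
    change (toRat.comp (twist q 1 0)).toLinearMap = _
    rw [twist_one_zero]
    rfl
  rintro _ (⟨k, hk, rfl⟩ | (rfl | rfl) | ⟨i, hi, rfl | rfl⟩) g hg
  · exact (hT k hk).comp_mem_twistSpan (by simp) hg
  · exact twistUnit_comp_mem_twistSpan hg
  · exact twistUnit_comp_mem_twistSpan hg
  · change toRat.toLinearMap ∘ₗ (XOp i * g) ∈ twistSpan q (N + 1)
    rw [XOp, dif_pos (by omega)]
    exact mulOp_comp_mem_twistSpan _ hg
  · change toRat.toLinearMap ∘ₗ (XinvOp i * g) ∈ twistSpan q (N + 1)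
    rw [XinvOp, dif_pos (by omega)]
    exact mulOp_comp_mem_twistSpan _ hg

lemma coe_unitX_mul_inv_unitX (i k : Fin n) :
    (↑(unitX i * (unitX k)⁻¹ : (Module.End F (Laur F n))ˣ) : Module.End F (Laur F n))
      = mulOp (mono (Finsupp.single i 1 - Finsupp.single k 1) 1) := by
  have hinv : (↑(unitX k : (Module.End F (Laur F n))ˣ)⁻¹ : Module.End F (Laur F n))
      = mulOp (XinvEl k) := dif_pos k.2
  rw [Units.val_mul, coe_unitX i.2, hinv, mulOp_mul, Xel, XinvEl, mono_mul_mono, mul_one,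
    Finsupp.single_neg, ← sub_eq_add_neg]

lemma mem_span_zpow_of_commute_hgl (hq : ∀ m : ℕ, m ≠ 0 → (q : F) ^ m ≠ 1)
    (hf : f ∈ (polynomialRep q hτ T hT hTinv).daha)
    (hfg : ∀ g ∈ (polynomialRep q hτ T hT hTinv).hgl, Commute f g) :
    f ∈ Submodule.span F (Set.range fun m : ℤ =>
      (↑((cyclicShift N q ^ (N + 1)) ^ m) : Module.End F (Laur F (N + 1)))) := by
  set ρ := polynomialRep q hτ T hT hTinv
  have hinj := zpow_injective_of_pow_ne_one q.ne_zero hq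
  have hfXD (i : ℕ) (hi : i ≤ N) : Commute f (ρ.X i * ρ.D N) := by
    rcases hi.lt_or_eq with hi | rfl
    · exact hfg _ (Algebra.subset_adjoin (Or.inr (Or.inr ⟨i, hi.le, N, le_rfl, hi.ne, rfl⟩)))
    · exact hfg _ (ρ.affineHecke_le_hgl ρ.X_last_mul_D_last_mem)
  have hratio (i k : Fin (N + 1)) (p : Laur F (N + 1)) :
      f (mono (Finsupp.single i 1 - Finsupp.single k 1) 1 * p)
        = mono (Finsupp.single i 1 - Finsupp.single k 1) 1 * f p := by
    have h := ρ.commute_X_mul_inv_X hq hf hfXD (by omega : (i : ℕ) ≤ N) (by omega : (k : ℕ) ≤ N)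
    change Commute (↑(unitX i * (unitX k)⁻¹ : (Module.End F (Laur F (N + 1)))ˣ) :
      Module.End F (Laur F (N + 1))) f at h
    rw [coe_unitX_mul_inv_unitX] at h
    exact (LinearMap.congr_fun h.eq p).symm
  have hfT (k : ℕ) (hk : k < N) : Commute f (T k) :=
    hfg _ (ρ.affineHecke_le_hgl (ρ.T_mem_affineHecke hk))
  have hfP : Commute f ↑(cyclicShift N q) := hfg _ (ρ.affineHecke_le_hgl
    (ρ.mem_affineHecke_of_mem_heckeUnits ρ.P_mem_heckeUnits))
  have hmono := exists_map_mono_eq_mono hinj (commute_twistUnit_single hfP fun k hk =>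
    (hT k hk).commute_permute hτ (by simp) (hfT k hk) (hratio _ _))
  have hspan := mem_span_twist_one (mem_span_twist_one_of_map_ratio_mul hinj
    (comp_mem_twistSpan_of_mem_daha q hτ T hT hTinv hf) hratio) hmono
  have hpow (m : ℤ) : ((cyclicShift N q ^ (N + 1)) ^ m : (Module.End F (Laur F (N + 1)))ˣ)
      = twistUnit q 1 fun _ => m := by
    rw [cyclicShift_pow, twistUnit_one_zpow]
    congr 1
    exact funext fun _ => mul_one m
  simp only [hpow]
  exact hspan

theorem mem_centralizer_hgl_iff (hq : ∀ m : ℕ, m ≠ 0 → (q : F) ^ m ≠ 1) :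
    (f ∈ (polynomialRep q hτ T hT hTinv).afr ∧
      ∀ g ∈ (polynomialRep q hτ T hT hTinv).hgl, Commute f g) ↔
    f ∈ Submodule.span F (Set.range fun m : ℤ =>
      (↑((cyclicShift N q ^ (N + 1)) ^ m) : Module.End F (Laur F (N + 1)))) := by
  set ρ := polynomialRep q hτ T hT hTinv
  refine ⟨fun ⟨hf, hfg⟩ =>
    mem_span_zpow_of_commute_hgl q hτ T hT hTinv hq (ρ.afr_le_daha hf) hfg, fun hf => ?_⟩
  have hH (m : ℤ) : (↑((ρ.P ^ (N + 1)) ^ m) : Module.End F (Laur F (N + 1))) ∈ ρ.affineHecke :=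
    ρ.mem_affineHecke_of_mem_heckeUnits (zpow_mem (pow_mem ρ.P_mem_heckeUnits _) m)
  have hcomm (m : ℤ) (g) (hg : g ∈ ρ.hgl) :
      Commute (↑((ρ.P ^ (N + 1)) ^ m) : Module.End F (Laur F (N + 1))) g :=
    ((ρ.mem_hgl_iff hq).1 hg).2.units_zpow_left m
  refine ⟨Submodule.span_le (p := Subalgebra.toSubmodule ρ.afr).2 ?_ hf, fun g hg => ?_⟩
  · rintro _ ⟨m, rfl⟩
    exact ρ.hgl_le_afr (ρ.affineHecke_le_hgl (hH m))
  · induction hf using Submodule.span_induction with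
    | mem f hf => obtain ⟨m, rfl⟩ := hf; exact hcomm m g hg
    | zero => exact Commute.zero_left g
    | add f f' _ _ hf hf' => exact hf.add_left hf'
    | smul a f _ hf => exact hf.smul_left a

end DoubleCentralizerPolynomial

section Operators

variable {A : Type*} [Monoid A]

lemma coe_aF {u : ℕ → Aˣ} {f : ℕ → A} {s l : ℕ} (h : ∀ k < s + l, ↑(u k) = f k) :
    ↑(aF u s l) = aF f s l :=
  (map_aF (Units.coeHom A) u s l).trans (aF_congr h)

lemma coe_dF {u : ℕ → Aˣ} {f : ℕ → A} {s l : ℕ} (h : ∀ k < s + l, ↑(u k) = f k) :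
    ↑(dF u s l) = dF f s l :=
  (map_dF (Units.coeHom A) u s l).trans (dF_congr h)

lemma exists_units_coe_eq {f g : ℕ → A} {N : ℕ} (h : ∀ k < N, f k * g k = 1 ∧ g k * f k = 1) :
    ∃ u : ℕ → Aˣ, ∀ k < N, ↑(u k) = f k ∧ ↑(u k)⁻¹ = g k := by
  have (k : ℕ) : ∃ u : Aˣ, k < N → ↑u = f k ∧ ↑u⁻¹ = g k := by
    by_cases hk : k < N
    · exact ⟨⟨f k, g k, (h k hk).1, (h k hk).2⟩, fun _ => ⟨rfl, rfl⟩⟩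
    · exact ⟨1, fun hk' => absurd hk' hk⟩
  exact Classical.axiom_of_choice this

lemma coe_prod_range {u : ℕ → Aˣ} {f : ℕ → A} {N : ℕ} (h : ∀ k < N, f k = ↑(u k)) :
    ((List.range N).map f).prod = ↑((List.range N).map u).prod := by
  rw [List.map_congr_left fun k hk => h k (List.mem_range.1 hk), ← Units.coeHom_apply,
    map_list_prod, List.map_map]
  rfl

lemma coe_inv_prod_range {u : ℕ → Aˣ} {g : ℕ → A} {N : ℕ} (h : ∀ k < N, g k = ↑(u k)⁻¹) :
    (((List.range N).map g).reverse).prod = ↑(((List.range N).map u).prod)⁻¹ := by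
  rw [List.map_congr_left fun k hk => h k (List.mem_range.1 hk), List.prod_inv_reverse,
    ← Units.coeHom_apply, map_list_prod, List.map_map, List.map_reverse, List.map_map]
  rfl

lemma zpowOp_coe_inv (u : Aˣ) (m : ℤ) : zpowOp (u : A) ↑u⁻¹ m = ↑(u ^ m) := by
  rcases m with m | m
  · simp [zpowOp]
  · simp [zpowOp, zpow_negSucc]

end Operators

namespace DAHARep

section Coe

variable {F A : Type*} [Field F] [Ring A] [Algebra F A] {N : ℕ} {q κ : F}
  (ρ : DAHARep F A N q κ) {T Ti : ℕ → A}

lemma coe_Y (hT : ∀ k < N, ↑(ρ.T k) = T k) (hTi : ∀ k < N, ↑(ρ.T k)⁻¹ = Ti k) {i : ℕ}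
    (hi : i ≤ N) : (ρ.Y i : A) = aF T i (N - i) * ρ.P * aF Ti 0 i := by
  rw [Y, affineY, Units.val_mul, Units.val_mul, coe_aF fun k hk => hT k (by omega),
    coe_aF (u := ρ.T⁻¹) fun k hk => hTi k (by omega)]

lemma D_eq (hT : ∀ k < N, ↑(ρ.T k) = T k) {i : ℕ} (hi : i ≤ N) :
    ρ.D i = aF T i (N - i) * ((q - q⁻¹)⁻¹ • (↑(ρ.X N)⁻¹ * (↑(ρ.Y N) - ↑(ρ.Y N)⁻¹)))
      * dF T i (N - i) := by
  rw [D, coe_aF fun k hk => hT k (by omega), coe_dF fun k hk => hT k (by omega)]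

end Coe

variable {F : Type*} [Field F] {N : ℕ} {q κ : F}
  (ρ : DAHARep F (Module.End F (Laur F (N + 1))) N q κ)
  {T X D Y Yi : ℕ → Module.End F (Laur F (N + 1))}

lemma adjoin_AfrSet (hT : ∀ k < N, ↑(ρ.T k) = T k) (hX : ∀ i ≤ N, ↑(ρ.X i) = X i)
    (hD : ∀ i ≤ N, ρ.D i = D i) (hY : ∀ i ≤ N, ↑(ρ.Y i) = Y i)
    (hYi : ∀ i ≤ N, ↑(ρ.Y i)⁻¹ = Yi i) :
    Algebra.adjoin F (AfrSet T X D Y Yi) = ρ.afr := by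
  rw [afr]
  congr 1
  ext f
  refine or_congr (exists_congr fun k => ?_) (exists_congr fun i => ?_)
  · rw [Nat.add_lt_add_iff_right]
    exact and_congr_right fun hk => by rw [hT k hk]
  · rw [Nat.lt_succ_iff]
    exact and_congr_right fun hi => by rw [hX i hi, hD i hi, hY i hi, hYi i hi]

lemma adjoin_HglSet {e : ℕ → ℕ → Module.End F (Laur F (N + 1))}
    (hT : ∀ k < N, ↑(ρ.T k) = T k) (hY : ∀ i ≤ N, ↑(ρ.Y i) = Y i)
    (hYi : ∀ i ≤ N, ↑(ρ.Y i)⁻¹ = Yi i) (he : ∀ i ≤ N, ∀ j ≤ N, ρ.X i * ρ.D j = e i j) :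
    Algebra.adjoin F (HglSet T Y Yi e) = ρ.hgl := by
  rw [hgl]
  congr 1
  ext f
  simp only [HglSet, Set.mem_ofPred_eq, Nat.lt_succ_iff, Nat.succ_le_iff]
  constructor
  · rintro (⟨k, hk, rfl⟩ | ⟨i, hi, rfl⟩ | ⟨i, hi, rfl⟩ | ⟨i, j, hi, hj, hij, rfl⟩)
    · exact Or.inl ⟨k, hk, (hT k hk).symm⟩
    · exact Or.inr (Or.inl ⟨i, hi, Or.inl (hY i hi).symm⟩)
    · exact Or.inr (Or.inl ⟨i, hi, Or.inr (hYi i hi).symm⟩)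
    · exact Or.inr (Or.inr ⟨i, hi, j, hj, hij, (he i hi j hj).symm⟩)
  · rintro (⟨k, hk, rfl⟩ | ⟨i, hi, rfl | rfl⟩ | ⟨i, hi, j, hj, hij, rfl⟩)
    · exact Or.inl ⟨k, hk, hT k hk⟩
    · exact Or.inr (Or.inl ⟨i, hi, hY i hi⟩)
    · exact Or.inr (Or.inr (Or.inl ⟨i, hi, hYi i hi⟩))
    · exact Or.inr (Or.inr (Or.inr ⟨i, j, hi, hj, hij, he i hi j hj⟩))

end DAHARep

lemma eq_permute {W : Equiv.Perm (Fin n) → Module.End R (Laur R n)}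
    (hW : ∀ w v r, W w (mono v r) = mono (Finsupp.equivMapDomain w v) r)
    (w : Equiv.Perm (Fin n)) : W w = (permute w).toLinearMap :=
  Laur.linearMap_ext fun v r => (hW w v r).trans (by simp [twist_mono])

lemma eq_coe_cyclicShift {N : ℕ} {q : Rˣ} {P : Module.End R (Laur R (N + 1))}
    (hP : ∀ v r, P (mono v r)
      = (↑(q ^ v 0) : R) • mono (Finsupp.equivMapDomain (finRotate (N + 1)).symm v) r) :
    P = ↑(cyclicShift N q) :=
  Laur.linearMap_ext fun v r => (hP v r).trans (cyclicShift_mono v r).symm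

theorem statement16_general {F : Type*} [Field F] {τ q : F} (hτ : τ ≠ 0) (hq : q ≠ 0)
    (hqroot : ∀ m : ℕ, m ≠ 0 → q ^ m ≠ 1) (n : ℕ) [NeZero n]
    (W : Equiv.Perm (Fin n) → Module.End F (Laur F n))
    (hW : ∀ w v r, W w (mono v r) = mono (Finsupp.equivMapDomain w v) r)
    (T Ti : ℕ → Module.End F (Laur F n))
    (hT : ∀ (k : ℕ) (hk : k + 1 < n) (p : Laur F n),
      (Xel ⟨k + 1, hk⟩ - Xel ⟨k, Nat.lt_of_succ_lt hk⟩) * T k p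
        = (τ⁻¹ • Xel ⟨k + 1, hk⟩ - τ • Xel ⟨k, Nat.lt_of_succ_lt hk⟩)
            * W (Equiv.swap ⟨k, Nat.lt_of_succ_lt hk⟩ ⟨k + 1, hk⟩) p
          + (τ - τ⁻¹) • (Xel ⟨k + 1, hk⟩ * p))
    (hTi : ∀ k, Ti k = T k + (τ⁻¹ - τ) • (1 : Module.End F (Laur F n)))
    (hTinv : ∀ k, k + 1 < n → T k * Ti k = 1 ∧ Ti k * T k = 1)
    (piInv : Module.End F (Laur F n))
    (hpiInv : ∀ (v : Fin n →₀ ℤ) (r : F),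
      piInv (mono v r) = q ^ (v 0) • mono (Finsupp.equivMapDomain (finRotate n).symm v) r)
    (Y Yi : ℕ → Module.End F (Laur F n))
    (hY : ∀ i, Y i = aF T i (n - 1 - i) * piInv * aF Ti 0 i)
    (hYinv : ∀ i, i < n → Y i * Yi i = 1 ∧ Yi i * Y i = 1)
    (D : ℕ → Module.End F (Laur F n))
    (hD : ∀ i, D i = aF T i (n - 1 - i)
        * ((q - q⁻¹)⁻¹ • (XinvOp (n - 1) * (Y (n - 1) - Yi (n - 1)))) * dF T i (n - 1 - i))
    (e : ℕ → ℕ → Module.End F (Laur F n)) (he : ∀ i j, e i j = XOp i * D j)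
    (Yt Yti : Module.End F (Laur F n))
    (hYt : Yt = ((List.range n).map Y).prod)
    (hYti : Yti = (((List.range n).map Yi).reverse).prod) :
    (∀ f, (f ∈ Algebra.adjoin F (AfrSet T (fun i => XOp i) D Y Yi) ∧ f * Yt = Yt * f)
        ↔ f ∈ Algebra.adjoin F (HglSet T Y Yi e)) ∧
    (∀ f, (f ∈ Algebra.adjoin F (AfrSet T (fun i => XOp i) D Y Yi) ∧
          ∀ g ∈ Algebra.adjoin F (HglSet T Y Yi e), f * g = g * f)
        ↔ f ∈ Submodule.span F (Set.range fun m : ℤ => zpowOp Yt Yti m)) := by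
  obtain ⟨N, rfl⟩ : ∃ N, n = N + 1 := Nat.exists_eq_succ_of_ne_zero (NeZero.ne n)
  obtain ⟨u, hu⟩ := exists_units_coe_eq fun k (hk : k < N) => hTinv k (Nat.succ_lt_succ hk)
  have huT k (hk : k < N) : (u k : Module.End F (Laur F (N + 1))) = T k := (hu k hk).1
  have huTi k (hk : k < N) : (↑(u k)⁻¹ : Module.End F (Laur F (N + 1))) = Ti k := (hu k hk).2
  have hDL k (hk : k < N) :
      IsDemazureLusztig (n := N + 1) τ ⟨k, by omega⟩ ⟨k + 1, by omega⟩ (u k) := fun p => by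
    rw [huT k hk, hT k (Nat.succ_lt_succ hk) p, eq_permute hW]; rfl
  have huinv k (hk : k < N) :
      (↑(u k)⁻¹ : Module.End F (Laur F (N + 1))) = u k + (τ⁻¹ - τ) • 1 := by
    rw [huTi k hk, huT k hk, hTi]
  set ρ := polynomialRep (Units.mk0 q hq) hτ u hDL huinv
  have hP : piInv = ρ.P := eq_coe_cyclicShift (q := Units.mk0 q hq) fun v r => by
    rw [hpiInv, Units.val_zpow_eq_zpow_val, Units.val_mk0]
  have hρY i (hi : i ≤ N) : ↑(ρ.Y i) = Y i := by
    rw [hY, hP]; exact ρ.coe_Y huT huTi hi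
  have hρYi i (hi : i ≤ N) : ↑(ρ.Y i)⁻¹ = Yi i :=
    Units.inv_eq_of_mul_eq_one_right (by rw [hρY i hi]; exact (hYinv i (by omega)).1)
  have hρD i (hi : i ≤ N) : ρ.D i = D i := by
    rw [ρ.D_eq huT hi, hρY N le_rfl, hρYi N le_rfl, hD]; rfl
  have hafr : Algebra.adjoin F (AfrSet T (fun i => XOp i) D Y Yi) = ρ.afr :=
    ρ.adjoin_AfrSet huT (fun _ _ => rfl) hρD hρY hρYi
  have hhgl : Algebra.adjoin F (HglSet T Y Yi e) = ρ.hgl :=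
    ρ.adjoin_HglSet huT hρY hρYi fun i _ j hj => by rw [he, ← hρD j hj]; rfl
  have hYt' : Yt = ↑(ρ.P ^ (N + 1)) := by
    rw [hYt, coe_prod_range fun i hi => (hρY i (Nat.lt_succ_iff.1 hi)).symm, ρ.prod_Y]
  have hYti' : Yti = ↑(ρ.P ^ (N + 1))⁻¹ := by
    rw [hYti, coe_inv_prod_range fun i hi => (hρYi i (Nat.lt_succ_iff.1 hi)).symm, ρ.prod_Y]
  simp only [hafr, hhgl, hYt', hYti', zpowOp_coe_inv]
  exact ⟨fun f => (and_congr_right fun _ => Commute.symm_iff).trans (ρ.mem_hgl_iff hqroot).symm,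
    fun f => mem_centralizer_hgl_iff _ hτ u hDL huinv hqroot⟩

/-- Over `F = ℂ(τ)` (realised as `RatFunc ℂ`), the double centraliser
property: the centraliser of `Ỹ = Y_1 ⋯ Y_n` in `𝔄` is `ℍ^{gl_n}`, and the centraliser of
`ℍ^{gl_n}` in `𝔄` is the `F`-linear span of the powers `Ỹ^m`, `m ∈ ℤ`. -/
theorem statement16
    (n : ℕ) [NeZero n]
    (q₀ : ℂ) (hq₀ : q₀ ≠ 0) (hq₀root : ∀ m : ℕ, m ≠ 0 → q₀ ^ m ≠ 1)
    -- the action of the symmetric group permuting the variables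
    (W : Equiv.Perm (Fin n) → Module.End (RatFunc ℂ) (Laur (RatFunc ℂ) n))
    (hW : ∀ (w : Equiv.Perm (Fin n)) (v : Fin n →₀ ℤ) (r : (RatFunc ℂ)),
      W w (mono v r) = mono (Finsupp.equivMapDomain w v) r)
    -- the Demazure–Lusztig operators `T_k` and their inverses `Ti k = T k + τ⁻¹ - τ`
    (T Ti : ℕ → Module.End (RatFunc ℂ) (Laur (RatFunc ℂ) n))
    (hT : ∀ (k : ℕ) (hk : k + 1 < n) (p : Laur (RatFunc ℂ) n),
      (Xel ⟨k + 1, hk⟩ - Xel ⟨k, Nat.lt_of_succ_lt hk⟩) * T k p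
        = ((RatFunc.X : RatFunc ℂ)⁻¹ • Xel ⟨k + 1, hk⟩ - (RatFunc.X : RatFunc ℂ) • Xel ⟨k, Nat.lt_of_succ_lt hk⟩)
            * W (Equiv.swap ⟨k, Nat.lt_of_succ_lt hk⟩ ⟨k + 1, hk⟩) p
          + ((RatFunc.X : RatFunc ℂ) - (RatFunc.X : RatFunc ℂ)⁻¹) • (Xel ⟨k + 1, hk⟩ * p))
    (hTi : ∀ k, Ti k = T k + ((RatFunc.X : RatFunc ℂ)⁻¹ - (RatFunc.X : RatFunc ℂ)) • (1 : Module.End (RatFunc ℂ) (Laur (RatFunc ℂ) n)))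
    (hTinv : ∀ k, k + 1 < n → T k * Ti k = 1 ∧ Ti k * T k = 1)
    -- the operator `π⁻¹`
    (piInv : Module.End (RatFunc ℂ) (Laur (RatFunc ℂ) n))
    (hpiInv : ∀ (v : Fin n →₀ ℤ) (r : (RatFunc ℂ)),
      piInv (mono v r)
        = (algebraMap ℂ (RatFunc ℂ) q₀) ^ (v 0) • mono (Finsupp.equivMapDomain (finRotate n).symm v) r)
    -- the operators `Y_i = T_i ⋯ T_{n-1} ⬝ π⁻¹ ⬝ T_1⁻¹ ⋯ T_{i-1}⁻¹` and their inverses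
    (Y Yi : ℕ → Module.End (RatFunc ℂ) (Laur (RatFunc ℂ) n))
    (hY : ∀ i, Y i = aF T i (n - 1 - i) * piInv * aF Ti 0 i)
    (hYinv : ∀ i, i < n → Y i * Yi i = 1 ∧ Yi i * Y i = 1)
    -- the `q`-Dunkl-type operators `D_i`
    (D : ℕ → Module.End (RatFunc ℂ) (Laur (RatFunc ℂ) n))
    (hD : ∀ i, D i = aF T i (n - 1 - i)
        * (((algebraMap ℂ (RatFunc ℂ) q₀) - (algebraMap ℂ (RatFunc ℂ) q₀)⁻¹)⁻¹ • (XinvOp (n - 1) * (Y (n - 1) - Yi (n - 1))))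
        * dF T i (n - 1 - i))
    -- the operators `e_{ij} = X_i · D_j`
    (e : ℕ → ℕ → Module.End (RatFunc ℂ) (Laur (RatFunc ℂ) n))
    (he : ∀ i j, e i j = XOp i * D j)
    -- the element `Ỹ = Y_1 ⋯ Y_n` and its inverse
    (Yt Yti : Module.End (RatFunc ℂ) (Laur (RatFunc ℂ) n))
    (hYt : Yt = ((List.range n).map Y).prod)
    (hYti : Yti = (((List.range n).map Yi).reverse).prod)
    :
    (∀ f : Module.End (RatFunc ℂ) (Laur (RatFunc ℂ) n),
      (f ∈ Algebra.adjoin (RatFunc ℂ) (AfrSet T (fun i => XOp i) D Y Yi) ∧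
          f * Yt = Yt * f)
        ↔ f ∈ Algebra.adjoin (RatFunc ℂ) (HglSet T Y Yi e)) ∧
    (∀ f : Module.End (RatFunc ℂ) (Laur (RatFunc ℂ) n),
      (f ∈ Algebra.adjoin (RatFunc ℂ) (AfrSet T (fun i => XOp i) D Y Yi) ∧
          ∀ g ∈ Algebra.adjoin (RatFunc ℂ) (HglSet T Y Yi e), f * g = g * f)
        ↔ f ∈ Submodule.span (RatFunc ℂ) (Set.range fun m : ℤ => zpowOp Yt Yti m)) := by
  exact statement16_general RatFunc.X_ne_zero (by simpa using hq₀)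
    (fun m hm => by
      rw [← map_pow, ne_eq, map_eq_one_iff _ (algebraMap ℂ (RatFunc ℂ)).injective]
      exact hq₀root m hm) n W hW T Ti hT hTi hTinv piInv hpiInv
    Y Yi hY hYinv D hD e he Yt Yti hYt hYti
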